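/- arXiv:1208.1783 — 2 statements merged into one kernel-verified Lean document; each statement's English description precedes it below -/
import Mathlib

section
/- Let F be a weighted constraint language over a finite domain D with Fun₁(D, [0,1]∩ℚ) ⊆ F ⊆ Fun(D, [0,1]∩ℚ) (i.e., F contains all unary functions D → [0,1]∩ℚ and all its weight functions take values in [0,1]∩ℚ). If F is weakly log-supermodular, then the valued constraint language ν(F) has an STP/MJN multimorphism. -/
open scoped NNRat ENNReal

/-- A cost function of some arity over domain `D`, taking values in `ℝ≥0 ∪ {∞}`. -/
abbrev CFun (D : Type) : Type := Σ k : ℕ, (Fin k → D) → ℝ≥0∞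

/-- The binary crisp equality cost function. -/
noncomputable def eqC (D : Type) [DecidableEq D] : (Fin 2 → D) → ℝ≥0∞ :=
  fun x => if x 0 = x 1 then 0 else ⊤

/-- `f` is definable by a psm-formula over `Φ ∪ {eq}`: a minimisation over `k`
bound variables of a sum of `m` atomic formulas. -/
def InVClone {D : Type} [Fintype D] [DecidableEq D] (Φ : Set (CFun D)) {n : ℕ}
    (f : (Fin n → D) → ℝ≥0∞) : Prop :=
  ∃ (k m : ℕ) (ar : Fin m → ℕ) (g : ∀ j : Fin m, (Fin (ar j) → D) → ℝ≥0∞)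
    (sc : ∀ j : Fin m, Fin (ar j) → Fin (n + k)),
    (∀ j : Fin m, (⟨ar j, g j⟩ : CFun D) ∈ Φ ∨ (⟨ar j, g j⟩ : CFun D) = ⟨2, eqC D⟩) ∧
    ∀ x : Fin n → D, f x = ⨅ y : Fin k → D, ∑ j : Fin m, g j (fun i => Fin.append x y (sc j i))

/-- Weak submodularity of a valued constraint language. -/
def WeaklySubmodular {D : Type} [Fintype D] [DecidableEq D] (Φ : Set (CFun D)) : Prop :=
  ∀ f : (Fin 2 → D) → ℝ≥0∞, InVClone Φ f → ∀ a b : D,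
    f ![a, a] + f ![b, b] ≤ f ![a, b] + f ![b, a] ∨ (f ![a, a] = ⊤ ∧ f ![b, b] = ⊤)

/-- A weight function of some arity over domain `D`, taking values in `ℚ≥0`. -/
abbrev WFun (D : Type) : Type := Σ k : ℕ, (Fin k → D) → ℚ≥0

/-- The binary equality weight function. -/
def EQw (D : Type) [DecidableEq D] : (Fin 2 → D) → ℚ≥0 :=
  fun x => if x 0 = x 1 then 1 else 0

/-- `F` is definable by a pps-formula over `𝓕 ∪ {EQ}`: a sum over `k` bound
variables of a product of `m` atomic formulas. -/
def InFClone {D : Type} [Fintype D] [DecidableEq D] (𝓕 : Set (WFun D)) {n : ℕ}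
    (F : (Fin n → D) → ℚ≥0) : Prop :=
  ∃ (k m : ℕ) (ar : Fin m → ℕ) (G : ∀ j : Fin m, (Fin (ar j) → D) → ℚ≥0)
    (sc : ∀ j : Fin m, Fin (ar j) → Fin (n + k)),
    (∀ j : Fin m, (⟨ar j, G j⟩ : WFun D) ∈ 𝓕 ∨ (⟨ar j, G j⟩ : WFun D) = ⟨2, EQw D⟩) ∧
    ∀ x : Fin n → D, F x = ∑ y : Fin k → D, ∏ j : Fin m, G j (fun i => Fin.append x y (sc j i))

/-- Weak log-supermodularity of a weighted constraint language. -/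
def WeaklyLogSupermodular {D : Type} [Fintype D] [DecidableEq D] (𝓕 : Set (WFun D)) : Prop :=
  ∀ F : (Fin 2 → D) → ℚ≥0, InFClone 𝓕 F → ∀ a b : D,
    F ![a, b] * F ![b, a] ≤ F ![a, a] * F ![b, b] ∨ (F ![a, a] = 0 ∧ F ![b, b] = 0)

/-- The cost function `ν(F)` associated with a `[0,1]`-valued weight function `F`:
`ν(F)(x) = -ln F(x)` if `F(x) > 0`, and `∞` if `F(x) = 0`. -/
noncomputable def nuF {D : Type} {k : ℕ} (F : (Fin k → D) → ℚ≥0) : (Fin k → D) → ℝ≥0∞ :=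
  fun x => if F x = 0 then ⊤ else ENNReal.ofReal (-Real.log ((F x : ℚ) : ℝ))

/-- The valued constraint language `ν(𝓕)`. -/
def nuSet {D : Type} (𝓕 : Set (WFun D)) : Set (CFun D) :=
  {g | ∃ F ∈ 𝓕, g = ⟨F.1, nuF F.2⟩}


/-- A `k`-tuple of `k`-ary operations is conservative if it preserves the
multiset of arguments. -/
def ConservativeTuple {D : Type} [Fintype D] {k : ℕ} (ρ : Fin k → (Fin k → D) → D) : Prop :=
  ∀ x : Fin k → D,
    (Finset.univ.val.map x : Multiset D) = Finset.univ.val.map (fun i => ρ i x)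

/-- A `k`-tuple of `k`-ary operations is a multimorphism of an arity-`r` cost
function `f`. -/
def IsMultimorphism {D : Type} {k r : ℕ} (ρ : Fin k → (Fin k → D) → D)
    (f : (Fin r → D) → ℝ≥0∞) : Prop :=
  ∀ x : Fin k → (Fin r → D),
    ∑ i : Fin k, f (fun j => ρ i (fun s => x s j)) ≤ ∑ i : Fin k, f (x i)

/-- The pair `⟨⊓, ⊔⟩` viewed as a 2-tuple of binary operations. -/
def pairTuple {D : Type} (inf sup : D → D → D) : Fin 2 → (Fin 2 → D) → D :=
  fun i x => if i = 0 then inf (x 0) (x 1) else sup (x 0) (x 1)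

/-- The triple `⟨Mj1, Mj2, Mn3⟩` viewed as a 3-tuple of ternary operations. -/
def tripleTuple {D : Type} (m1 m2 m3 : D → D → D → D) : Fin 3 → (Fin 3 → D) → D :=
  fun i x =>
    if i = 0 then m1 (x 0) (x 1) (x 2)
    else if i = 1 then m2 (x 0) (x 1) (x 2)
    else m3 (x 0) (x 1) (x 2)

/-- A valued constraint language `Φ` has an STP/MJN multimorphism: there are a
symmetric `M ⊆ D²`, a conservative pair `⟨⊓, ⊔⟩` that is an STP on `M`, and a
conservative triple `⟨Mj1, Mj2, Mn3⟩` that is an MJN on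
`{(a,b) ∈ D² \ M : a ≠ b}`, with both tuples multimorphisms of every `f ∈ Φ`. -/
def HasSTPMJN {D : Type} [Fintype D] (Φ : Set (CFun D)) : Prop :=
  ∃ (inf sup : D → D → D) (m1 m2 m3 : D → D → D → D) (M : Set (D × D)),
    (∀ a b : D, (a, b) ∈ M → (b, a) ∈ M) ∧
    ConservativeTuple (pairTuple inf sup) ∧
    ConservativeTuple (tripleTuple m1 m2 m3) ∧
    (∀ g ∈ Φ, IsMultimorphism (pairTuple inf sup) g.2) ∧
    (∀ g ∈ Φ, IsMultimorphism (tripleTuple m1 m2 m3) g.2) ∧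
    (∀ a b : D, (a, b) ∈ M → inf a b = inf b a ∧ sup a b = sup b a) ∧
    (∀ a b c x y : D, ({a, b, c} : Multiset D) = {x, x, y} → x ≠ y → (x, y) ∉ M →
      m1 a b c = x ∧ m2 a b c = x ∧ m3 a b c = y)

/-!
Replacing sums by maxima turns the binary functions definable over `𝓕` into a max-product clone: a
sum of `r`-th powers is the `r`-th power of the maximum up to a constant factor, which disappears on
taking `r`-th roots. So `f a b * f b a ≤ f a a * f b b`, or `f a a = f b b = 0`, for all `f` in this
clone.

Say that `f` links `(a, b)` to `(c, d)` if `f a d * f b c < f a c * f b d`. Links compose, hence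
being linked is an equivalence relation on pairs of distinct elements. If `(a, b)` is not linked to
`(b, a)`, then the classes of the two pairs differ, and orienting each pair by a fixed order of the
classes gives the symmetric tournament pair. If `(a, b)` is linked to `(b, a)`, then weak
log-supermodularity forces every link from `(a, b)` to be hard, that is, `f a d = f b c = 0`; on
such pairs the supports behave like equations, and the majority and minority operations preserve
them.

For a function `F` of any arity, the inequality `F x * F y ≤ F x' * F y'`, where `x'` and `y'` arise
from `x` and `y` by exchanging a block of coordinates, follows from its binary case: it suffices
that no maximum of `F` over a box links an exchanged coordinate to one that stays in place.
-/

namespace STPMJN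

open Finset Function

/-! ### Exchanging blocks of coordinates -/

section Exchange

variable {Γ : Type*} [LinearOrderedCommMonoidWithZero Γ]

lemma mul_le_mul_or_eq_zero {a b c d p q : Γ} (hl : a * p ≤ b * q) (hr : q * c ≤ p * d) :
    a * c ≤ b * d ∨ p = 0 ∧ q = 0 := by
  by_cases hp : p = 0
  · by_cases hq : q = 0
    · exact .inr ⟨hp, hq⟩
    · have hc : c = 0 := by simpa [hp, hq] using hr
      simp [hc]
  · by_cases hq : q = 0
    · have ha : a = 0 := by simpa [hp, hq] using hl
      simp [ha]
    · refine .inl (le_of_mul_le_mul_right (a := p * q) ?_ (zero_lt_iff.2 (mul_ne_zero hp hq)))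
      calc a * c * (p * q) = a * p * (q * c) := by ac_rfl
        _ ≤ b * q * (p * d) := mul_le_mul' hl hr
        _ = b * d * (p * q) := by ac_rfl

lemma mul_le_mul_of_max_mul_max_le {a b c d p q p' q' : Γ}
    (hl : a * p ≤ b * q) (hr : q * c ≤ p * d) (hl' : a * p' ≤ b * q') (hr' : q' * c ≤ p' * d)
    (hmax : max a q' * max p c ≤ max b p' * max q d) : a * c ≤ b * d := by
  rcases mul_le_mul_or_eq_zero hl hr with h | ⟨rfl, rfl⟩
  · exact h
  rcases mul_le_mul_or_eq_zero hl' hr' with h | ⟨rfl, rfl⟩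
  · exact h
  simpa using hmax

variable {ι : Type*} [DecidableEq ι] {T : ι → Type*}

lemma piecewise_piecewise_comm {K S : Finset ι} (hKS : Disjoint K S) (u v B : ∀ i, T i) :
    K.piecewise u (S.piecewise v B) = S.piecewise v (K.piecewise u B) := by
  funext l
  by_cases hK : l ∈ K
  · simp [hK, Finset.disjoint_left.1 hKS hK]
  · simp [Finset.piecewise, hK]

/-- The log-submodularity type inequality comparing, over every background `B`, the assignments
that agree on the blocks `K` and `S` (both `x` or both `y`) with the two mixed ones. -/
def ExchangeLE (F : (∀ i, T i) → Γ) (x y : ∀ i, T i) (K S : Finset ι) : Prop :=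
  ∀ B, F (K.piecewise x (S.piecewise x B)) * F (K.piecewise y (S.piecewise y B)) ≤
    F (K.piecewise x (S.piecewise y B)) * F (K.piecewise y (S.piecewise x B))

namespace ExchangeLE

variable {F : (∀ i, T i) → Γ} {x y : ∀ i, T i} {K S : Finset ι}

lemma symm (hKS : Disjoint K S) (h : ExchangeLE F x y K S) : ExchangeLE F x y S K := by
  intro B
  simp only [piecewise_piecewise_comm hKS.symm]
  rw [mul_comm (F (K.piecewise y (S.piecewise x B)))]
  exact h B

lemma empty_left : ExchangeLE F x y ∅ S := by
  intro B
  simp only [piecewise_empty]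
  exact (mul_comm _ _).le

/- The four inequalities `hK` and `hi` over backgrounds through `x i` or `y i` chain to the claim
unless all four intermediate values vanish; the background through the merged state `m` excludes
that degenerate case. -/
lemma insert {i : ι} (hiK : i ∉ K) (hiS : i ∉ S) (hKS : Disjoint K S)
    (hmerge : ∃ m, ∀ B, F (update B i m) = max (F (update B i (x i))) (F (update B i (y i))))
    (hi : ExchangeLE F x y {i} S) (hK : ExchangeLE F x y K S) :
    ExchangeLE F x y (insert i K) S := by
  intro B
  obtain ⟨m, hm⟩ := hmerge
  have hK_update (t : T i) := hK (update B i t)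
  simp only [← update_piecewise_of_notMem _ _ _ hiS, ← update_piecewise_of_notMem _ _ _ hiK]
    at hK_update
  have hi_piecewise (v : ∀ i, T i) := hi (K.piecewise v B)
  simp only [piecewise_singleton, ← piecewise_piecewise_comm hKS] at hi_piecewise
  have hmax := hK_update m
  simp only [hm] at hmax
  simp only [piecewise_insert]
  exact mul_le_mul_of_max_mul_max_le (hK_update (x i)) (hi_piecewise y) (hi_piecewise x)
    (hK_update (y i)) hmax

lemma of_forall_left
    (hmerge : ∀ i, ∃ m, ∀ B, F (update B i m) = max (F (update B i (x i))) (F (update B i (y i))))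
    (hKS : Disjoint K S) (h : ∀ k ∈ K, ExchangeLE F x y {k} S) : ExchangeLE F x y K S := by
  induction K using Finset.induction_on with
  | empty => exact empty_left
  | insert i K hiK ih =>
    rw [disjoint_insert_left] at hKS
    exact insert hiK hKS.1 hKS.2 (hmerge i) (h i (mem_insert_self i K))
      (ih hKS.2 fun k hk => h k (mem_insert_of_mem hk))

lemma of_forall_singleton
    (hmerge : ∀ i, ∃ m, ∀ B, F (update B i m) = max (F (update B i (x i))) (F (update B i (y i))))
    (hKS : Disjoint K S) (h : ∀ k ∈ K, ∀ i ∈ S, ExchangeLE F x y {k} {i}) :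
    ExchangeLE F x y K S := by
  refine of_forall_left hmerge hKS fun k hk => ?_
  have hkS : k ∉ S := Finset.disjoint_left.1 hKS hk
  refine (of_forall_left hmerge (disjoint_singleton_right.2 hkS) fun i hi => ?_).symm
    (disjoint_singleton_right.2 hkS)
  exact (h k hk i hi).symm (disjoint_singleton.2 (ne_of_mem_of_not_mem hi hkS).symm)

end ExchangeLE

end Exchange

/-! ### Links between pairs of domain elements -/

section Links

variable {D Γ : Type*} [LinearOrderedCommGroupWithZero Γ]

/-- The link relation from the pair `(a, b)` to the pair `(c, d)`: the binary function `f` strictly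
prefers the parallel matching `a c, b d` to the crossed one `a d, b c`. -/
def Links (f : D → D → Γ) (a b c d : D) : Prop := f a d * f b c < f a c * f b d

/-- A hard link: `f`, restricted to `{a, b} × {c, d}`, is supported on the parallel matching. -/
structure Matches (f : D → D → Γ) (a b c d : D) : Prop where
  left_ne : f a c ≠ 0
  right_ne : f b d ≠ 0
  left_eq : f a d = 0
  right_eq : f b c = 0

variable {f g : D → D → Γ} {a b c d e k : D}

lemma links_of_eq_zero (hac : f a c ≠ 0) (hbd : f b d ≠ 0) (h : f a d = 0 ∨ f b c = 0) :
    Links f a b c d := by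
  have hzero : f a d * f b c = 0 := mul_eq_zero.2 h
  rw [Links, hzero]
  exact zero_lt_iff.2 (mul_ne_zero hac hbd)

namespace Links

lemma left_ne (h : Links f a b c d) : f a c ≠ 0 :=
  left_ne_zero_of_mul (pos_iff_ne_zero.1 (zero_le.trans_lt h))

lemma right_ne (h : Links f a b c d) : f b d ≠ 0 :=
  right_ne_zero_of_mul (pos_iff_ne_zero.1 (zero_le.trans_lt h))

lemma target_ne (h : Links f a b c d) : c ≠ d := by
  rintro rfl
  exact lt_irrefl _ h

lemma swap (h : Links f a b c d) : Links f b a d c := by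
  simpa only [Links, mul_comm] using h

lemma flip (h : Links f a b c d) : Links (flip f) c d a b := by
  simpa only [Links, Function.flip_def, mul_comm (f b c)] using h

end Links

lemma Matches.links (h : Matches f a b c d) : Links f a b c d :=
  links_of_eq_zero h.left_ne h.right_ne (.inl h.left_eq)

lemma Links.comp_of_lt (hf : Links f a b c d) (hg : Links g c d e k)
    (hb : f b c * g c k < f b d * g d k) (ha : f a d * g d e < f a c * g c e) :
    Links (fun s t => max (f s c * g c t) (f s d * g d t)) a b e k := by
  have hfac := zero_lt_iff.2 hf.left_ne
  have hfbd := zero_lt_iff.2 hf.right_ne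
  have hgce := zero_lt_iff.2 hg.left_ne
  have hgdk := zero_lt_iff.2 hg.right_ne
  refine lt_of_lt_of_le ?_ (mul_le_mul' (le_max_left (f a c * g c e) (f a d * g d e))
    (le_max_right (f b c * g c k) (f b d * g d k)))
  dsimp only
  rcases max_choice (f a c * g c k) (f a d * g d k) with hak | hak <;>
    rcases max_choice (f b c * g c e) (f b d * g d e) with hbe | hbe <;> rw [hak, hbe]
  · calc f a c * g c k * (f b c * g c e) = f a c * g c e * (f b c * g c k) := by ac_rfl
      _ < f a c * g c e * (f b d * g d k) := by gcongr
  · calc f a c * g c k * (f b d * g d e) = f a c * f b d * (g c k * g d e) := by ac_rfl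
      _ < f a c * f b d * (g c e * g d k) := mul_lt_mul_of_pos_left hg (by positivity)
      _ = f a c * g c e * (f b d * g d k) := by ac_rfl
  · calc f a d * g d k * (f b c * g c e) = f a d * f b c * (g c e * g d k) := by ac_rfl
      _ < f a c * f b d * (g c e * g d k) := mul_lt_mul_of_pos_right hf (by positivity)
      _ = f a c * g c e * (f b d * g d k) := by ac_rfl
  · calc f a d * g d k * (f b d * g d e) = f a d * g d e * (f b d * g d k) := by ac_rfl
      _ < f a c * g c e * (f b d * g d k) := by gcongr

lemma Matches.of_max_comp (hf : Links f a b c d) (hg : Links g c d e k)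
    (h : Matches (fun s t => max (f s c * g c t) (f s d * g d t)) a b e k) :
    Matches f a b c d := by
  have had : f a d * g d k = 0 := le_zero_iff.1 ((le_max_right _ _).trans h.left_eq.le)
  have hbc : f b c * g c e = 0 := le_zero_iff.1 ((le_max_left _ _).trans h.right_eq.le)
  exact ⟨hf.left_ne, hf.right_ne, (mul_eq_zero.1 had).resolve_right hg.right_ne,
    (mul_eq_zero.1 hbc).resolve_right hg.left_ne⟩

variable {w : D → Γ}

lemma links_weighted (hc : w c ≠ 0) (hd : w d ≠ 0) :
    Links (fun s z => w z * f s z) a b c d ↔ Links f a b c d := by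
  have hpos : 0 < w c * w d := zero_lt_iff.2 (mul_ne_zero hc hd)
  have hcross : w d * f a d * (w c * f b c) = w c * w d * (f a d * f b c) := by ac_rfl
  rw [Links, Links, hcross, mul_mul_mul_comm (w c) (f a c), mul_lt_mul_iff_right₀ hpos]

lemma Matches.of_weighted (h : Matches (fun s z => w z * f s z) a b c d) : Matches f a b c d where
  left_ne := right_ne_zero_of_mul h.left_ne
  right_ne := right_ne_zero_of_mul h.right_ne
  left_eq := (mul_eq_zero.1 h.left_eq).resolve_left (left_ne_zero_of_mul h.right_ne)
  right_eq := (mul_eq_zero.1 h.right_eq).resolve_left (left_ne_zero_of_mul h.left_ne)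

/-- Some member of `C` links `(a, b)` to `(c, d)`. -/
def Linked (C : Set (D → D → Γ)) (a b c d : D) : Prop := ∃ f ∈ C, Links f a b c d

/-- The pair `(a, b)` is linked to its reversal. On such pairs a majority operation is used, on all
other pairs a minimum. -/
def SelfLinked (C : Set (D → D → Γ)) (a b : D) : Prop := Linked C a b b a

variable {C : Set (D → D → Γ)}

lemma Linked.swap : Linked C a b c d → Linked C b a d c :=
  fun ⟨f, hf, h⟩ => ⟨f, hf, h.swap⟩

lemma SelfLinked.symm (h : SelfLinked C a b) : SelfLinked C b a := Linked.swap h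

lemma SelfLinked.ne (h : SelfLinked C a b) : a ≠ b := by
  obtain ⟨f, -, hf⟩ := h
  exact hf.target_ne.symm

end Links

/-! ### Log-supermodular max-product clones -/

section Weights

variable {Γ : Type*} [LinearOrderedCommGroupWithZero Γ] [DenselyOrdered Γ]

lemma exists_pos_ge_mul_lt {X Z A : Γ} (h : X * Z < A) : ∃ Z' > 0, Z ≤ Z' ∧ X * Z' < A := by
  rcases eq_or_ne Z 0 with rfl | hZ
  · obtain ⟨e, he, heA⟩ := exists_between (by simpa only [mul_zero] using h : 0 < A)
    have hmax : 0 < max X 1 := zero_lt_one.trans_le (le_max_right X 1)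
    refine ⟨e / max X 1, div_pos he hmax, zero_le, lt_of_le_of_lt ?_ heA⟩
    calc X * (e / max X 1) ≤ max X 1 * (e / max X 1) := mul_le_mul_left (le_max_left X 1) _
      _ = e := mul_div_cancel₀ e hmax.ne'
  · exact ⟨Z, zero_lt_iff.2 hZ, le_rfl, h⟩

lemma exists_weights {X Y Z T : Γ} (hY : 0 < Y) (h : X * Z < Y * T) :
    ∃ p q : Γ, p ≠ 0 ∧ q ≠ 0 ∧ p ≤ 1 ∧ q ≤ 1 ∧ p * X < q * Y ∧ q * Z < p * T := by
  obtain ⟨Z', hZ', hZ, h⟩ := exists_pos_ge_mul_lt h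
  obtain ⟨w, hXw, hwT⟩ := exists_between (show X / Y < T / Z' by
    rwa [div_lt_div_iff₀ hY hZ', mul_comm T])
  rw [div_lt_iff₀ hY] at hXw
  rw [lt_div_iff₀ hZ'] at hwT
  have hw : 0 < w := pos_of_mul_pos_left (lt_of_le_of_lt zero_le hXw) zero_le
  have hmax : 0 < max 1 w := zero_lt_one.trans_le (le_max_left 1 w)
  have hp : 0 < (max 1 w)⁻¹ := inv_pos.2 hmax
  refine ⟨(max 1 w)⁻¹, (max 1 w)⁻¹ * w, hp.ne', (mul_pos hp hw).ne',
    inv_le_one_of_one_le₀ (le_max_left 1 w), ?_, ?_, ?_⟩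
  · exact inv_mul_le_one_of_le₀ (le_max_right 1 w) zero_le
  · rw [mul_assoc]
    gcongr
  · rw [mul_assoc]
    have hZw : w * Z < T := (mul_le_mul_right hZ w).trans_lt hwT
    gcongr

end Weights

lemma sup_ite_zero {α Γ : Type*} [LinearOrderedCommMonoidWithZero Γ] (s : Finset α) (p : α → Prop)
    [DecidablePred p] (h : α → Γ) :
    (s.sup fun d => if p d then h d else 0) = (s.filter p).sup h := by
  rw [Finset.sup_ite, ← bot_eq_zero, Finset.sup_bot, max_bot_right]

section Clone

variable {D Γ : Type*} [Fintype D] [DecidableEq D] [LinearOrderedCommGroupWithZero Γ]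

/-- The binary part of a weakly log-supermodular clone in which summation is replaced by
maximisation and in which bound variables may carry unary weights. -/
structure IsLogSupermodularClone (C : Set (D → D → Γ)) : Prop where
  eq_mem : (fun s t => if s = t then 1 else 0) ∈ C
  flip_mem : ∀ {f}, f ∈ C → flip f ∈ C
  comp_mem : ∀ {f g}, f ∈ C → g ∈ C → ∀ {w : D → Γ}, (∀ d, w d ≤ 1) →
    (fun s t => univ.sup fun d => w d * (f s d * g d t)) ∈ C
  diag : ∀ {f}, f ∈ C → ∀ a b, f a b * f b a ≤ f a a * f b b ∨ f a a = 0 ∧ f b b = 0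

variable {C : Set (D → D → Γ)} {f g : D → D → Γ} {a b c d e k : D}

namespace IsLogSupermodularClone

lemma comp_finset_mem (hC : IsLogSupermodularClone C) (hf : f ∈ C) (hg : g ∈ C) (S : Finset D)
    {w : D → Γ} (hw : ∀ d, w d ≤ 1) :
    (fun s t => S.sup fun d => w d * f s d * g d t) ∈ C := by
  have hmem := hC.comp_mem hf hg (w := fun d => if d ∈ S then w d else 0) fun d => by
    split_ifs
    exacts [hw d, zero_le]
  have hsup (h : D → Γ) : (univ.sup fun d => (if d ∈ S then w d else 0) * h d) =
      S.sup fun d => w d * h d := by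
    simp only [ite_mul, zero_mul, sup_ite_zero, Finset.filter_univ_mem]
  simpa only [hsup, mul_assoc] using hmem

lemma comp_pair_mem (hC : IsLogSupermodularClone C) (hf : f ∈ C) (hg : g ∈ C) (c d : D)
    {w : D → Γ} (hw : ∀ d, w d ≤ 1) :
    (fun s t => max (w c * f s c * g c t) (w d * f s d * g d t)) ∈ C := by
  simpa only [sup_insert, sup_singleton] using hC.comp_finset_mem hf hg {c, d} hw

lemma exists_comp_finset (hC : IsLogSupermodularClone C) (hf : f ∈ C) (hg : g ∈ C) (S : Finset D) :
    ∃ φ ∈ C, ∀ s t, φ s t = 0 ↔ ∀ d ∈ S, f s d = 0 ∨ g d t = 0 := by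
  refine ⟨_, hC.comp_finset_mem hf hg S (w := 1) fun _ => le_rfl, fun s t => ?_⟩
  simp only [Pi.one_apply, one_mul, ← bot_eq_zero, Finset.sup_eq_bot_iff]
  simp only [bot_eq_zero, mul_eq_zero]

end IsLogSupermodularClone

/- The weights on `c` and `d` are chosen to balance the two cross terms. -/
lemma Links.exists_comp [DenselyOrdered Γ] (hC : IsLogSupermodularClone C) (hf : f ∈ C)
    (hg : g ∈ C) (hfl : Links f a b c d) (hgl : Links g c d e k) :
    ∃ φ ∈ C, Links φ a b e k ∧ (Matches φ a b e k → Matches f a b c d) := by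
  have hcross : f b c * g c k * (f a d * g d e) < f b d * g d k * (f a c * g c e) :=
    calc f b c * g c k * (f a d * g d e) = f a d * f b c * (g c k * g d e) := by ac_rfl
      _ < f a c * f b d * (g c e * g d k) := mul_lt_mul'' hfl hgl zero_le zero_le
      _ = f b d * g d k * (f a c * g c e) := by ac_rfl
  have hpos : 0 < f b d * g d k := zero_lt_iff.2 (mul_ne_zero hfl.right_ne hgl.right_ne)
  obtain ⟨p, q, hp, hq, hp1, hq1, hb, ha⟩ := exists_weights hpos hcross
  let w : D → Γ := fun z => if z = c then p else q
  have hwc : w c = p := if_pos rfl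
  have hwd : w d = q := if_neg hfl.target_ne.symm
  have hw (z : D) : w z ≤ 1 := by
    dsimp only [w]
    split_ifs
    exacts [hp1, hq1]
  have hwfl : Links (fun s z => w z * f s z) a b c d :=
    (links_weighted (hwc ▸ hp) (hwd ▸ hq)).2 hfl
  refine ⟨_, hC.comp_pair_mem hf hg c d hw, ?_, fun h => (h.of_max_comp hwfl hgl).of_weighted⟩
  apply hwfl.comp_of_lt hgl
  · simpa only [hwc, hwd, mul_assoc] using hb
  · simpa only [hwc, hwd, mul_assoc] using ha

namespace Linked

lemma refl (hC : IsLogSupermodularClone C) (hab : a ≠ b) : Linked C a b a b :=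
  ⟨_, hC.eq_mem, links_of_eq_zero (by simp) (by simp) (.inl (if_neg hab))⟩

lemma symm (hC : IsLogSupermodularClone C) : Linked C a b c d → Linked C c d a b :=
  fun ⟨f, hf, h⟩ => ⟨flip f, hC.flip_mem hf, h.flip⟩

lemma trans [DenselyOrdered Γ] (hC : IsLogSupermodularClone C) :
    Linked C a b c d → Linked C c d e k → Linked C a b e k := by
  rintro ⟨f, hf, hfl⟩ ⟨g, hg, hgl⟩
  obtain ⟨φ, hφ, hφl, -⟩ := hfl.exists_comp hC hf hg hgl
  exact ⟨φ, hφ, hφl⟩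

end Linked

namespace SelfLinked

lemma of_linked [DenselyOrdered Γ] (hC : IsLogSupermodularClone C) (h : SelfLinked C a b)
    (hl : Linked C a b c d) : SelfLinked C c d :=
  ((hl.symm hC).trans hC h).trans hC hl.swap

/- Composing `f` with its transpose and with the self-link gives a member of `C` linking `(a, b)` to
`(b, a)`; by weak log-supermodularity its diagonal vanishes on `a` and `b`. -/
lemma matches_of_links [DenselyOrdered Γ] (hC : IsLogSupermodularClone C) (h : SelfLinked C a b)
    (hf : f ∈ C) (hl : Links f a b c d) : Matches f a b c d := by
  obtain ⟨g, hg, hgl⟩ := h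
  obtain ⟨φ, hφ, hφl, hφm⟩ := hl.exists_comp hC hf (hC.flip_mem hf) hl.flip
  obtain ⟨ψ, hψ, hψl, hψm⟩ := hφl.exists_comp hC hφ hg hgl
  refine hφm (hψm ?_)
  rcases hC.diag hψ a b with hle | ⟨ha, hb⟩
  · exact absurd hψl hle.not_gt
  · exact ⟨hψl.left_ne, hψl.right_ne, ha, hb⟩

end SelfLinked

/-- The pairs linked to `(a, b)`. -/
def linkClass (C : Set (D → D → Γ)) (a b : D) : Set (D × D) := {q | Linked C a b q.1 q.2}

lemma Linked.linkClass_eq [DenselyOrdered Γ] (hC : IsLogSupermodularClone C)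
    (h : Linked C a b c d) : linkClass C a b = linkClass C c d :=
  Set.ext fun _ => ⟨(h.symm hC).trans hC, h.trans hC⟩

lemma selfLinked_of_linkClass_eq (hC : IsLogSupermodularClone C) (hab : a ≠ b)
    (h : linkClass C a b = linkClass C b a) : SelfLinked C a b := by
  have hmem : (b, a) ∈ linkClass C b a := Linked.refl hC hab.symm
  rwa [← h] at hmem

/-- The pair `(a, b)` is reversed by the symmetric tournament operations: it comes after `(b, a)` in
a fixed well-ordering of the link classes. -/
def IsReversed (C : Set (D → D → Γ)) (a b : D) : Prop :=
  WellOrderingRel (linkClass C b a) (linkClass C a b)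

lemma Linked.isReversed_iff [DenselyOrdered Γ] (hC : IsLogSupermodularClone C)
    (h : Linked C a b c d) : IsReversed C a b ↔ IsReversed C c d := by
  rw [IsReversed, IsReversed, h.linkClass_eq hC, h.swap.linkClass_eq hC]

lemma isReversed_comm (hC : IsLogSupermodularClone C) (hab : a ≠ b) (h : ¬ SelfLinked C a b) :
    IsReversed C b a ↔ ¬ IsReversed C a b :=
  ⟨fun hba => asymm (r := WellOrderingRel) hba, fun hab' =>
    ((trichotomous_of WellOrderingRel (linkClass C a b) (linkClass C b a)).resolve_right
      (not_or.2 ⟨fun heq => h (selfLinked_of_linkClass_eq hC hab heq), hab'⟩))⟩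

open Classical in
/-- The operation `⊓` of the symmetric tournament pair. -/
noncomputable def infOp (C : Set (D → D → Γ)) (a b : D) : D := if IsReversed C a b then b else a

open Classical in
/-- The operation `⊔` of the symmetric tournament pair. -/
noncomputable def supOp (C : Set (D → D → Γ)) (a b : D) : D := if IsReversed C a b then a else b

lemma infOp_comm (hC : IsLogSupermodularClone C) (h : ¬ SelfLinked C a b) :
    infOp C a b = infOp C b a := by
  rcases eq_or_ne a b with rfl | hab
  · rfl
  · have hrev := isReversed_comm hC hab h
    by_cases hr : IsReversed C a b <;> simp [infOp, hr, hrev]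

lemma supOp_comm (hC : IsLogSupermodularClone C) (h : ¬ SelfLinked C a b) :
    supOp C a b = supOp C b a := by
  rcases eq_or_ne a b with rfl | hab
  · rfl
  · have hrev := isReversed_comm hC hab h
    by_cases hr : IsReversed C a b <;> simp [supOp, hr, hrev]

end Clone

/-! ### Separation of one element from two others -/

section Separation

variable {D Γ : Type*} [LinearOrderedCommGroupWithZero Γ]

/-- Some member of `C` matches a self-linked pair both to `(s, o)` and to `(t, o)`, so that `o` is
the element of `{s, t, o}` in the minority. -/
def Separated (C : Set (D → D → Γ)) (o s t : D) : Prop :=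
  ∃ u v, SelfLinked C u v ∧ ∃ f ∈ C, Matches f u v s o ∧ Matches f u v t o

variable {C : Set (D → D → Γ)} {f g : D → D → Γ} {o s t x y z x' y' z' : D}

namespace Separated

lemma comm : Separated C o s t ↔ Separated C o t s := by
  simp only [Separated, and_comm]

lemma ne (h : Separated C o s t) : o ≠ s := by
  obtain ⟨u, v, -, f, -, hs, -⟩ := h
  exact hs.links.target_ne.symm

variable [Fintype D] [DecidableEq D]

lemma of_selfLinked (hC : IsLogSupermodularClone C) (h : SelfLinked C x y) : Separated C y x x := by
  have hmatch : Matches (fun s t : D => if s = t then (1 : Γ) else 0) x y x y :=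
    ⟨by simp, by simp, if_neg h.ne, if_neg h.ne.symm⟩
  exact ⟨x, y, h, _, hC.eq_mem, hmatch, hmatch⟩

variable [DenselyOrdered Γ]

lemma selfLinked (hC : IsLogSupermodularClone C) (h : Separated C o s t) : SelfLinked C o t := by
  obtain ⟨u, v, huv, f, hf, -, ht⟩ := h
  exact (huv.of_linked hC ⟨f, hf, ht.links⟩).symm

/- The composite below would be a link from a self-linked pair that is not hard. -/
lemma asymm (hC : IsLogSupermodularClone C) (h : Separated C x y z) : ¬ Separated C y x z := by
  rintro ⟨u', v', -, g, hg, hgx, hgz⟩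
  obtain ⟨u, v, huv, f, hf, hfy, hfz⟩ := h
  obtain ⟨φ, hφ, hzero⟩ := hC.exists_comp_finset hf (hC.flip_mem hg) {x, y, z}
  have hvv : φ v v' = 0 := by simp [hzero, flip, hfy.right_eq, hfz.right_eq, hgx.right_eq]
  have hvu : φ v u' ≠ 0 := by simp [hzero, flip, hfy.right_ne, hgx.left_ne]
  have huv' : φ u v' ≠ 0 := by simp [hzero, flip, hfy.left_ne, hgx.right_ne]
  have huu : φ u u' ≠ 0 := by simp [hzero, flip, hfz.left_ne, hgz.left_ne]
  exact huu (huv.matches_of_links hC hφ (links_of_eq_zero huv' hvu (.inr hvv))).left_eq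

lemma transfer (hC : IsLogSupermodularClone C) (h : Separated C y x z) (hg : g ∈ C)
    (hx : g x x' ≠ 0) (hy : g y y' ≠ 0) (hz : g z z' ≠ 0) (hyz : g y z' = 0) :
    Separated C y' x' z' := by
  obtain ⟨u, v, huv, f, hf, hfx, hfz⟩ := h
  obtain ⟨φ, hφ, hzero⟩ := hC.exists_comp_finset hf hg {x, y, z}
  have hvy : φ v y' ≠ 0 := by simp [hzero, hfx.right_ne, hy]
  have hvz : φ v z' = 0 := by simp [hzero, hfx.right_eq, hfz.right_eq, hyz]
  have huz : φ u z' ≠ 0 := by simp [hzero, hfz.left_ne, hz]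
  have hux : φ u x' ≠ 0 := by simp [hzero, hfx.left_ne, hx]
  have hmatch_z : Matches φ u v z' y' :=
    huv.matches_of_links hC hφ (links_of_eq_zero huz hvy (.inr hvz))
  have hmatch_x : Matches φ u v x' y' :=
    huv.matches_of_links hC hφ (links_of_eq_zero hux hvy (.inl hmatch_z.left_eq))
  exact ⟨u, v, huv, φ, hφ, hmatch_x, hmatch_z⟩

end Separated

open Classical in
/-- The first majority operation of the MJN triple. -/
noncomputable def majOp₁ (C : Set (D → D → Γ)) (a b c : D) : D :=
  if Separated C a b c then c else a

open Classical in
/-- The second majority operation of the MJN triple. -/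
noncomputable def majOp₂ (C : Set (D → D → Γ)) (a b c : D) : D :=
  if Separated C b a c then c else b

open Classical in
/-- The minority operation of the MJN triple. -/
noncomputable def minOp (C : Set (D → D → Γ)) (a b c : D) : D :=
  if Separated C a b c then a else if Separated C b a c then b else c

end Separation

/-! ### From binary projections to functions of any arity -/

section Box

variable {ι D Γ : Type*} [LinearOrderedCommGroupWithZero Γ]

/-- The indicator functions of the sides of a box. -/
def boxIndicator [DecidableEq D] (B : ι → Finset D) (l : ι) (d : D) : Γ := if d ∈ B l then 1 else 0

lemma boxIndicator_le_one [DecidableEq D] (B : ι → Finset D) (l : ι) (d : D) :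
    boxIndicator B l d ≤ (1 : Γ) := by
  unfold boxIndicator
  split_ifs
  exacts [le_rfl, zero_le]

variable [Fintype ι] [DecidableEq ι]

/-- The maximum of `F` over the box `∏ l, B l`. -/
def boxMax (F : (ι → D) → Γ) (B : ι → Finset D) : Γ := (Fintype.piFinset B).sup F

variable {F : (ι → D) → Γ}

lemma boxMax_singleton (p : ι → D) : boxMax F (fun l => {p l}) = F p := by
  simp [boxMax]

lemma boxMax_update_pair [DecidableEq D] (B : ι → Finset D) (i : ι) (a b : D) :
    boxMax F (update B i {a, b}) = max (boxMax F (update B i {a})) (boxMax F (update B i {b})) := by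
  have hunion : Fintype.piFinset (update B i {a, b}) =
      Fintype.piFinset (update B i {a}) ∪ Fintype.piFinset (update B i {b}) := by
    ext z
    simp only [mem_union, Fintype.mem_piFinset,
      forall_update_iff B fun l (T : Finset D) => z l ∈ T, mem_insert, mem_singleton, or_and_right]
  rw [boxMax, hunion, sup_union]
  rfl

end Box

section Projection

variable {ι D Γ : Type*} [Fintype ι] [DecidableEq ι] [Fintype D] [DecidableEq D]
  [LinearOrderedCommGroupWithZero Γ]

/-- The binary max-projection of `F` to the coordinates `i` and `k`, with unary weights `u`. -/
def maxProj (F : (ι → D) → Γ) (i k : ι) (u : ι → D → Γ) (s t : D) : Γ :=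
  ({z | z i = s ∧ z k = t} : Finset (ι → D)).sup fun z => F z * ∏ l, u l (z l)

/-- All binary max-projections of `F` with unary weights at most `1` belong to `C`. -/
def MaxProjIn (C : Set (D → D → Γ)) (F : (ι → D) → Γ) : Prop :=
  ∀ (i k : ι) (u : ι → D → Γ), (∀ l d, u l d ≤ 1) → maxProj F i k u ∈ C

variable {F : (ι → D) → Γ}

lemma boxMax_update_update (B : ι → Finset D) {i k : ι} (hik : i ≠ k) (s t : D) :
    boxMax F (update (update B k {t}) i {s}) =
      maxProj F i k (boxIndicator (update (update B k univ) i univ)) s t := by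
  simp only [maxProj, boxIndicator, prod_ite_zero, mul_ite, prod_const_one, mul_one, mul_zero,
    sup_ite_zero, filter_filter, boxMax]
  congr 1
  ext z
  simp only [Fintype.mem_piFinset, update_apply, mem_filter]
  grind

/- Linked pairs of coordinates are moved together, so `ExchangeLE` holds for singleton blocks of
`boxMax F`. -/
lemma mul_le_mul_ite {x y : ι → D} {p : ι → Prop} [DecidablePred p]
    (h : ∀ i k B, p i → ¬ p k → ¬ Links (maxProj F i k (boxIndicator B)) (x i) (y i) (x k) (y k)) :
    F x * F y ≤ F (fun l => if p l then y l else x l) * F (fun l => if p l then x l else y l) := by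
  let S : Finset ι := {l | p l}
  have hexch : ExchangeLE (boxMax F) (fun l => {x l}) (fun l => {y l}) S Sᶜ := by
    refine .of_forall_singleton (fun i => ⟨{x i, y i}, fun B => boxMax_update_pair B i _ _⟩)
      disjoint_compl_right fun i hi k hk B => ?_
    have hik : i ≠ k := ne_of_mem_of_not_mem hi (mem_compl.1 hk)
    simp only [piecewise_singleton, boxMax_update_update B hik]
    exact not_lt.1 (h i k _ (by simpa [S] using hi) (by simpa [S] using hk))
  have hval (v w : ι → D) : boxMax F (S.piecewise (fun l => {v l})
      (Sᶜ.piecewise (fun l => {w l}) fun _ => ∅)) = F fun l => if p l then v l else w l := by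
    rw [← boxMax_singleton (F := F)]
    congr 1
    funext l
    by_cases hl : p l <;> simp [S, hl]
  have hF := hexch fun _ => ∅
  simp only [hval, ite_self] at hF
  rwa [mul_comm (F fun l => if p l then y l else x l)]

lemma maxProj_le_one (hF : ∀ z, F z ≤ 1) {u : ι → D → Γ} (hu : ∀ l d, u l d ≤ 1) (i k : ι)
    (s t : D) : maxProj F i k u s t ≤ 1 :=
  Finset.sup_le fun z _ => mul_le_one' (hF z) (prod_le_one' fun l _ => hu l (z l))

lemma maxProj_mono {u v : ι → D → Γ} (huv : u ≤ v) (i k : ι) (s t : D) :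
    maxProj F i k u s t ≤ maxProj F i k v s t :=
  sup_mono_fun fun z _ => mul_le_mul_right (prod_le_prod' fun l _ => huv l (z l)) (F z)

lemma le_maxProj (u : ι → D → Γ) (i k : ι) (z : ι → D) :
    F z * ∏ l, u l (z l) ≤ maxProj F i k u (z i) (z k) :=
  Finset.le_sup (f := fun z => F z * ∏ l, u l (z l)) (by simp)

lemma maxProj_max_le {u : ι → D → Γ} {ε : Γ} (hF : ∀ z, F z ≤ 1) (hu : ∀ l d, u l d ≤ 1)
    (hε : ε ≤ 1) {i k : ι} {s t : D} (h : maxProj F i k u s t = 0) :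
    maxProj F i k (fun l d => max (u l d) ε) s t ≤ ε := by
  refine Finset.sup_le fun z hz => ?_
  obtain ⟨rfl, rfl⟩ := (mem_filter.1 hz).2
  rcases mul_eq_zero.1 (le_zero_iff.1 ((le_maxProj u i k z).trans h.le)) with hFz | hprod
  · simp [hFz]
  obtain ⟨l, -, hl⟩ := prod_eq_zero_iff.1 hprod
  calc F z * ∏ l, max (u l (z l)) ε ≤ 1 * max (u l (z l)) ε := by
        refine mul_le_mul' (hF z) ?_
        rw [← mul_prod_erase _ _ (mem_univ l)]
        exact mul_le_of_le_one_right' (prod_le_one' fun l _ => max_le (hu l _) hε)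
    _ = ε := by simp [hl]

variable {C : Set (D → D → Γ)}

lemma mul_le_infOp_mul_supOp [DenselyOrdered Γ] (hC : IsLogSupermodularClone C)
    (hF : MaxProjIn C F) (x y : ι → D) :
    F x * F y ≤ F (fun l => infOp C (x l) (y l)) * F (fun l => supOp C (x l) (y l)) := by
  classical
  refine mul_le_mul_ite fun i k B hi hk hlinks => hk ?_
  have hlinked : Linked C (x i) (y i) (x k) (y k) :=
    ⟨_, hF i k _ (boxIndicator_le_one B), hlinks⟩
  exact (hlinked.isReversed_iff hC).1 hi

/- Raising all weights to at least a small `ε` keeps the link, which then is again hard because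
`(a, b)` is self-linked. -/
lemma exists_matches_ne_zero_of_links [DenselyOrdered Γ] (hC : IsLogSupermodularClone C)
    (hF1 : ∀ z, F z ≤ 1) (hF : MaxProjIn C F) {u : ι → D → Γ} (hu : ∀ l d, u l d ≤ 1) {i k : ι}
    {a b c d : D} (hab : SelfLinked C a b) (h : Links (maxProj F i k u) a b c d) :
    ∃ g ∈ C, Matches g a b c d ∧ ∀ z, F z ≠ 0 → g (z i) (z k) ≠ 0 := by
  have hpos : 0 < maxProj F i k u a c * maxProj F i k u b d :=
    zero_lt_iff.2 (mul_ne_zero h.left_ne h.right_ne)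
  obtain ⟨ε, hε0, hε⟩ := exists_between (lt_min hpos one_pos)
  have hε1 : ε ≤ 1 := (hε.trans_le (min_le_right _ _)).le
  let v : ι → D → Γ := fun l d => max (u l d) ε
  have hv (l : ι) (d : D) : v l d ≤ 1 := max_le (hu l d) hε1
  have huv : u ≤ v := fun l d => le_max_left _ _
  have hvlinks : Links (maxProj F i k v) a b c d :=
    calc maxProj F i k v a d * maxProj F i k v b c
        ≤ ε * 1 := mul_le_mul'
          (maxProj_max_le hF1 hu hε1 (hab.matches_of_links hC (hF i k u hu) h).left_eq)
          (maxProj_le_one hF1 hv i k b c)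
      _ < maxProj F i k u a c * maxProj F i k u b d := by
        rw [mul_one]
        exact hε.trans_le (min_le_left _ _)
      _ ≤ maxProj F i k v a c * maxProj F i k v b d :=
        mul_le_mul' (maxProj_mono huv i k a c) (maxProj_mono huv i k b d)
  refine ⟨_, hF i k v hv, hab.matches_of_links hC (hF i k v hv) hvlinks, fun z hz => ?_⟩
  have hprod : ∏ l, v l (z l) ≠ 0 :=
    prod_ne_zero_iff.2 fun l _ => (hε0.trans_le (le_max_right _ _)).ne'
  exact ((zero_lt_iff.2 (mul_ne_zero hz hprod)).trans_le (le_maxProj v i k z)).ne'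

open Classical in
lemma mul_le_mul_ite_separated [DenselyOrdered Γ] (hC : IsLogSupermodularClone C)
    (hF1 : ∀ z, F z ≤ 1) (hF : MaxProjIn C F) {x y z : ι → D} (hx : F x ≠ 0) (hy : F y ≠ 0)
    (hz : F z ≠ 0) :
    F y * F z ≤ F (fun l => if Separated C (y l) (x l) (z l) then z l else y l) *
      F (fun l => if Separated C (y l) (x l) (z l) then y l else z l) := by
  refine mul_le_mul_ite fun i k B hi hk hlinks => hk ?_
  obtain ⟨g, hg, hmatch, hne⟩ := exists_matches_ne_zero_of_links hC hF1 hF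
    (boxIndicator_le_one B) (hi.selfLinked hC) hlinks
  exact hi.transfer hC hg (hne x hx) (hne y hy) (hne z hz) hmatch.left_eq

/- The triple arises from `(x, y, z)` by exchanging `y` and `z` where `y` is the minority, and then
exchanging `x` with the new `z` where `x` is the minority. -/
lemma mul_le_majOp₁_mul_majOp₂_mul_minOp [DenselyOrdered Γ] (hC : IsLogSupermodularClone C)
    (hF1 : ∀ z, F z ≤ 1) (hF : MaxProjIn C F) (x y z : ι → D) :
    F x * F y * F z ≤ F (fun l => majOp₁ C (x l) (y l) (z l)) *
      F (fun l => majOp₂ C (x l) (y l) (z l)) * F (fun l => minOp C (x l) (y l) (z l)) := by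
  classical
  rcases eq_or_ne (F x * F y * F z) 0 with hzero | hne
  · simp [hzero]
  obtain ⟨⟨hx, hy⟩, hz⟩ := (mul_ne_zero_iff.1 hne).imp_left mul_ne_zero_iff.1
  let y' : ι → D := fun l => majOp₂ C (x l) (y l) (z l)
  let z' : ι → D := fun l => if Separated C (y l) (x l) (z l) then y l else z l
  have hyz : F y * F z ≤ F y' * F z' := mul_le_mul_ite_separated hC hF1 hF hx hy hz
  have hyz' : F y' * F z' ≠ 0 := ((zero_lt_iff.2 (mul_ne_zero hy hz)).trans_le hyz).ne'
  have hsep (l : ι) : Separated C (x l) (y' l) (z' l) ↔ Separated C (x l) (y l) (z l) := by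
    simp only [y', z', majOp₂]
    split_ifs
    exacts [Separated.comm, Iff.rfl]
  have hmaj (l : ι) : (if Separated C (x l) (y l) (z l) then z' l else x l) =
      majOp₁ C (x l) (y l) (z l) :=
    ite_congr rfl (fun h => if_neg (h.asymm hC)) fun _ => rfl
  have hxz : F x * F z' ≤ F (fun l => majOp₁ C (x l) (y l) (z l)) *
      F (fun l => minOp C (x l) (y l) (z l)) := by
    have hle := mul_le_mul_ite_separated hC hF1 hF (left_ne_zero_of_mul hyz') hx
      (right_ne_zero_of_mul hyz')
    simp only [hsep, hmaj] at hle
    exact hle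
  calc F x * F y * F z = F x * (F y * F z) := mul_assoc _ _ _
    _ ≤ F x * (F y' * F z') := mul_le_mul_right hyz _
    _ = F x * F z' * F y' := by ac_rfl
    _ ≤ F (fun l => majOp₁ C (x l) (y l) (z l)) * F (fun l => minOp C (x l) (y l) (z l)) * F y' :=
      mul_le_mul_left hxz _
    _ = F (fun l => majOp₁ C (x l) (y l) (z l)) * F y' *
        F (fun l => minOp C (x l) (y l) (z l)) := mul_right_comm _ _ _

end Projection

/-! ### Functions definable by pps-formulas -/

section PPS

variable {D : Type} [Fintype D] [DecidableEq D]

/-- Definability by a pps-formula over `𝓕 ∪ {EQ}` with free variables in an arbitrary type `V`, and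
bound variables and atoms indexed by arbitrary finite types. -/
def PPSDefinable (𝓕 : Set (WFun D)) {V : Type} (F : (V → D) → ℚ≥0) : Prop :=
  ∃ (κ J : Type) (_ : Fintype κ) (_ : DecidableEq κ) (_ : Fintype J) (A : J → WFun D)
    (σ : ∀ j, Fin (A j).1 → V ⊕ κ), (∀ j, A j ∈ 𝓕 ∨ A j = ⟨2, EQw D⟩) ∧
    ∀ x, F x = ∑ y : κ → D, ∏ j, (A j).2 (Sum.elim x y ∘ σ j)

lemma comp_vecCons_vecCons {α β : Type*} (x : α → β) (a b : α) : x ∘ ![a, b] = ![x a, x b] := by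
  funext i
  fin_cases i <;> rfl

namespace PPSDefinable

variable {𝓕 : Set (WFun D)} {V W : Type} {F G : (V → D) → ℚ≥0}

lemma atom {A : WFun D} (hA : A ∈ 𝓕 ∨ A = ⟨2, EQw D⟩) (σ : Fin A.1 → V) :
    PPSDefinable 𝓕 fun x => A.2 (x ∘ σ) :=
  ⟨Empty, Unit, inferInstance, inferInstance, inferInstance, fun _ => A, fun _ => Sum.inl ∘ σ,
    fun _ => hA, fun x => by simp [← comp_assoc]⟩

lemma eq (v w : V) : PPSDefinable 𝓕 fun x => if x v = x w then 1 else 0 :=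
  atom (.inr rfl) ![v, w]

lemma unary {u : D → ℚ≥0} (hu : (⟨1, fun x => u (x 0)⟩ : WFun D) ∈ 𝓕) (v : V) :
    PPSDefinable 𝓕 fun x => u (x v) :=
  atom (.inl hu) ![v]

lemma one : PPSDefinable 𝓕 fun _ : V → D => 1 :=
  ⟨Empty, Empty, inferInstance, inferInstance, inferInstance, Empty.elim, fun j => j.elim,
    fun j => j.elim, fun x => by simp⟩

lemma comp (hF : PPSDefinable 𝓕 F) (τ : V → W) : PPSDefinable 𝓕 fun x => F (x ∘ τ) := by
  obtain ⟨κ, J, _, _, _, A, σ, hA, hF⟩ := hF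
  refine ⟨κ, J, inferInstance, inferInstance, inferInstance, A, fun j => Sum.map τ id ∘ σ j, hA,
    fun x => ?_⟩
  simp only [hF, ← comp_assoc, Sum.elim_comp_map, comp_id]

lemma mul (hF : PPSDefinable 𝓕 F) (hG : PPSDefinable 𝓕 G) :
    PPSDefinable 𝓕 fun x => F x * G x := by
  obtain ⟨κ, J, _, _, _, A, σ, hA, hF⟩ := hF
  obtain ⟨κ', J', _, _, _, A', σ', hA', hG⟩ := hG
  refine ⟨κ ⊕ κ', J ⊕ J', inferInstance, inferInstance, inferInstance, Sum.elim A A',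
    Sum.rec (fun j => Sum.map id Sum.inl ∘ σ j) (fun j => Sum.map id Sum.inr ∘ σ' j),
    Sum.rec hA hA', fun x => ?_⟩
  rw [← (Equiv.sumArrowEquivProdArrow κ κ' D).symm.sum_comp, Fintype.sum_prod_type]
  simp only [hF, hG, sum_mul_sum]
  refine sum_congr rfl fun y _ => sum_congr rfl fun y' _ => ?_
  have hinl : Sum.elim x y =
      Sum.elim x ((Equiv.sumArrowEquivProdArrow κ κ' D).symm (y, y')) ∘ Sum.map id Sum.inl := by
    rw [Sum.elim_comp_map, comp_id]
    rfl
  have hinr : Sum.elim x y' =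
      Sum.elim x ((Equiv.sumArrowEquivProdArrow κ κ' D).symm (y, y')) ∘ Sum.map id Sum.inr := by
    rw [Sum.elim_comp_map, comp_id]
    rfl
  rw [Fintype.prod_sum_type, hinl, hinr]
  rfl

lemma prod {α : Type*} (s : Finset α) {F : α → (V → D) → ℚ≥0}
    (hF : ∀ a ∈ s, PPSDefinable 𝓕 (F a)) : PPSDefinable 𝓕 fun x => ∏ a ∈ s, F a x := by
  induction s using Finset.cons_induction with
  | empty => exact one
  | cons a s ha ih =>
    simp only [prod_cons]
    exact (hF a (mem_cons_self a s)).mul (ih fun b hb => hF b (mem_cons_of_mem hb))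

lemma pow (hF : PPSDefinable 𝓕 F) (r : ℕ) : PPSDefinable 𝓕 fun x => F x ^ r := by
  simpa only [prod_const, card_range] using prod (range r) fun _ _ => hF

lemma sum {κ : Type} [Fintype κ] [DecidableEq κ] {F : (V ⊕ κ → D) → ℚ≥0}
    (hF : PPSDefinable 𝓕 F) : PPSDefinable 𝓕 fun x => ∑ y : κ → D, F (Sum.elim x y) := by
  obtain ⟨κ', J, _, _, _, A, σ, hA, hF⟩ := hF
  refine ⟨κ ⊕ κ', J, inferInstance, inferInstance, inferInstance, A,
    fun j => Equiv.sumAssoc V κ κ' ∘ σ j, hA, fun x => ?_⟩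
  rw [← (Equiv.sumArrowEquivProdArrow κ κ' D).symm.sum_comp, Fintype.sum_prod_type]
  refine sum_congr rfl fun y _ => (hF _).trans (sum_congr rfl fun y' _ => ?_)
  have helim : Sum.elim (Sum.elim x y) y' =
      Sum.elim x ((Equiv.sumArrowEquivProdArrow κ κ' D).symm (y, y')) ∘ Equiv.sumAssoc V κ κ' := by
    funext v
    rcases v with (v | v) | v <;> rfl
  simp only [helim, comp_assoc]

lemma inFClone {n : ℕ} {F : (Fin n → D) → ℚ≥0} (hF : PPSDefinable 𝓕 F) : InFClone 𝓕 F := by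
  obtain ⟨κ, J, _, _, _, A, σ, hA, hF⟩ := hF
  let eκ := Fintype.equivFin κ
  let eJ := Fintype.equivFin J
  let τ : Fin n ⊕ κ → Fin (n + Fintype.card κ) := Sum.elim (Fin.castAdd _) (Fin.natAdd n ∘ eκ)
  refine ⟨Fintype.card κ, Fintype.card J, fun j => (A (eJ.symm j)).1, fun j => (A (eJ.symm j)).2,
    fun j => τ ∘ σ (eJ.symm j), fun j => hA _, fun x => ?_⟩
  have happend (y : Fin (Fintype.card κ) → D) : Fin.append x y ∘ τ = Sum.elim x (y ∘ eκ) := by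
    funext v
    rcases v with v | v <;> simp [τ]
  rw [hF, ← (eκ.arrowCongr (Equiv.refl D)).symm.sum_comp]
  refine sum_congr rfl fun y _ => ?_
  rw [← eJ.symm.prod_comp]
  refine prod_congr rfl fun j _ => congrArg (A (eJ.symm j)).2 ?_
  exact (congrArg (· ∘ σ (eJ.symm j)) (happend y)).symm

lemma sum_mul_mul {F G : (Fin 2 → D) → ℚ≥0} (hF : PPSDefinable 𝓕 F) (hG : PPSDefinable 𝓕 G)
    {u : D → ℚ≥0} (hu : (⟨1, fun x => u (x 0)⟩ : WFun D) ∈ 𝓕) :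
    PPSDefinable 𝓕 fun x : Fin 2 → D => ∑ d, u d * (F ![x 0, d] * G ![d, x 1]) := by
  have hsum := ((unary hu (Sum.inr ())).mul
    ((hF.comp ![Sum.inl 0, Sum.inr ()]).mul (hG.comp ![Sum.inr (), Sum.inl (1 : Fin 2)]))).sum
  convert hsum using 2 with x
  rw [← (Equiv.funUnique Unit D).symm.sum_comp]
  simp [comp_vecCons_vecCons]

lemma sum_filter_mul_prod {ι : Type} [Fintype ι] [DecidableEq ι] {F : (ι → D) → ℚ≥0}
    (hF : PPSDefinable 𝓕 F) {u : ι → D → ℚ≥0}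
    (hu : ∀ l, (⟨1, fun x => u l (x 0)⟩ : WFun D) ∈ 𝓕) (i k : ι) :
    PPSDefinable 𝓕 fun x : Fin 2 → D =>
      ∑ z : ι → D with z i = x 0 ∧ z k = x 1, F z * ∏ l, u l (z l) := by
  have hsum := (((eq (Sum.inr i) (Sum.inl 0)).mul (eq (Sum.inr k) (Sum.inl (1 : Fin 2)))).mul
    ((hF.comp Sum.inr).mul (prod univ fun l _ => unary (hu l) (Sum.inr l)))).sum
  convert hsum using 2 with x
  simp only [sum_filter, Sum.elim_inl, Sum.elim_inr, Sum.elim_comp_inr]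
  refine sum_congr rfl fun z _ => ?_
  by_cases hi : z i = x 0 <;> by_cases hk : z k = x 1 <;> simp [hi, hk]

end PPSDefinable

lemma sup_pow_succ_le_sum {α : Type*} (s : Finset α) (f : α → ℚ≥0) (r : ℕ) :
    s.sup f ^ (r + 1) ≤ ∑ a ∈ s, f a ^ (r + 1) := by
  rcases s.eq_empty_or_nonempty with rfl | hs
  · simp
  · obtain ⟨a, ha, hsup⟩ := exists_mem_eq_sup s hs f
    rw [hsup]
    exact single_le_sum (f := fun a => f a ^ (r + 1)) (fun _ _ => zero_le) ha

lemma sum_pow_le_card_mul_sup_pow {α : Type*} (s : Finset α) (f : α → ℚ≥0) (r : ℕ) :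
    ∑ a ∈ s, f a ^ r ≤ #s * s.sup f ^ r := by
  rw [← nsmul_eq_mul]
  exact sum_le_card_nsmul s _ _ fun a ha => pow_le_pow_left' (le_sup ha) r

lemma le_of_forall_pow_succ_le_mul_pow_succ {K : Type*} [Semifield K] [LinearOrder K]
    [IsStrictOrderedRing K] [Archimedean K] [ExistsAddOfLE K] {A B N : K} (hB : 0 ≤ B)
    (h : ∀ r : ℕ, A ^ (r + 1) ≤ N * B ^ (r + 1)) : A ≤ B := by
  rcases hB.eq_or_lt with rfl | hB
  · simpa using h 0
  by_contra! hlt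
  have hratio : 1 < A / B := (one_lt_div hB).2 hlt
  obtain ⟨r, hr⟩ := pow_unbounded_of_one_lt N hratio
  have hle : (A / B) ^ (r + 1) ≤ N := by
    rw [div_pow, div_le_iff₀ (pow_pos hB _)]
    exact h r
  exact (hr.trans_le (pow_le_pow_right₀ hratio.le r.le_succ)).not_ge hle

/-- The binary functions all of whose positive powers are, up to a constant factor that does not
depend on the exponent, definable by pps-formulas. High powers turn sums into maxima, so these
functions form a max-product clone. -/
def maxClone (𝓕 : Set (WFun D)) : Set (D → D → ℚ≥0) :=
  {f | ∃ N : ℚ≥0, ∀ r : ℕ, ∃ g : (Fin 2 → D) → ℚ≥0, PPSDefinable 𝓕 g ∧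
    ∀ s t, f s t ^ (r + 1) ≤ g ![s, t] ∧ g ![s, t] ≤ N * f s t ^ (r + 1)}

namespace maxClone

variable {𝓕 : Set (WFun D)} {f g : D → D → ℚ≥0}

lemma eq_mem : (fun s t => if s = t then 1 else 0) ∈ maxClone 𝓕 := by
  refine ⟨1, fun r => ⟨_, .eq 0 1, fun s t => ?_⟩⟩
  by_cases h : s = t <;> simp [h]

lemma flip_mem (hf : f ∈ maxClone 𝓕) : flip f ∈ maxClone 𝓕 := by
  obtain ⟨N, hN⟩ := hf
  refine ⟨N, fun r => ?_⟩
  obtain ⟨p, hp, hpf⟩ := hN r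
  refine ⟨_, hp.comp ![1, 0], fun s t => ?_⟩
  simpa [comp_vecCons_vecCons, flip] using hpf t s

lemma comp_mem {w : D → ℚ≥0} (hw : ∀ r, (⟨1, fun x => w (x 0) ^ (r + 1)⟩ : WFun D) ∈ 𝓕)
    (hf : f ∈ maxClone 𝓕) (hg : g ∈ maxClone 𝓕) :
    (fun s t => univ.sup fun d => w d * (f s d * g d t)) ∈ maxClone 𝓕 := by
  obtain ⟨N, hN⟩ := hf
  obtain ⟨N', hN'⟩ := hg
  refine ⟨N * N' * Fintype.card D, fun r => ?_⟩
  obtain ⟨p, hp, hpf⟩ := hN r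
  obtain ⟨q, hq, hqg⟩ := hN' r
  refine ⟨_, hp.sum_mul_mul hq (u := fun d => w d ^ (r + 1)) (hw r), fun s t => ⟨?_, ?_⟩⟩
  · refine (sup_pow_succ_le_sum _ _ r).trans (sum_le_sum fun d _ => ?_)
    rw [mul_pow, mul_pow]
    exact mul_le_mul_right (mul_le_mul' (hpf s d).1 (hqg d t).1) _
  · calc ∑ d, w d ^ (r + 1) * (p ![s, d] * q ![d, t])
        ≤ ∑ d, w d ^ (r + 1) * (N * f s d ^ (r + 1) * (N' * g d t ^ (r + 1))) := by
          gcongr with d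
          exacts [(hpf s d).2, (hqg d t).2]
      _ = N * N' * ∑ d, (w d * (f s d * g d t)) ^ (r + 1) := by
          rw [mul_sum]
          exact sum_congr rfl fun d _ => by ring
      _ ≤ N * N' * (Fintype.card D * (univ.sup fun d => w d * (f s d * g d t)) ^ (r + 1)) := by
          gcongr
          exact sum_pow_le_card_mul_sup_pow _ _ _
      _ = N * N' * Fintype.card D * (univ.sup fun d => w d * (f s d * g d t)) ^ (r + 1) :=
          (mul_assoc _ _ _).symm

lemma diag (h𝓕 : WeaklyLogSupermodular 𝓕) (hf : f ∈ maxClone 𝓕) (a b : D) :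
    f a b * f b a ≤ f a a * f b b ∨ f a a = 0 ∧ f b b = 0 := by
  obtain ⟨N, hN⟩ := hf
  refine or_iff_not_imp_right.2 fun hne => ?_
  refine le_of_forall_pow_succ_le_mul_pow_succ (N := N * N) zero_le fun r => ?_
  obtain ⟨g, hg, hgf⟩ := hN r
  have hzero (c : D) (hc : g ![c, c] = 0) : f c c = 0 :=
    eq_zero_of_pow_eq_zero (le_zero_iff.1 ((hgf c c).1.trans hc.le))
  have hle := (h𝓕 g hg.inFClone a b).resolve_right fun h => hne (h.imp (hzero a) (hzero b))
  calc (f a b * f b a) ^ (r + 1) = f a b ^ (r + 1) * f b a ^ (r + 1) := mul_pow _ _ _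
    _ ≤ g ![a, b] * g ![b, a] := mul_le_mul' (hgf a b).1 (hgf b a).1
    _ ≤ g ![a, a] * g ![b, b] := hle
    _ ≤ N * f a a ^ (r + 1) * (N * f b b ^ (r + 1)) := mul_le_mul' (hgf a a).2 (hgf b b).2
    _ = N * N * (f a a * f b b) ^ (r + 1) := by ring

lemma isLogSupermodularClone (h𝓕 : WeaklyLogSupermodular 𝓕)
    (hunary : ∀ u : D → ℚ≥0, (∀ d, u d ≤ 1) → (⟨1, fun x => u (x 0)⟩ : WFun D) ∈ 𝓕) :
    IsLogSupermodularClone (maxClone 𝓕) where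
  eq_mem := eq_mem
  flip_mem := flip_mem
  comp_mem hf hg _ hw := comp_mem (fun _ => hunary _ fun d => pow_le_one' (hw d) _) hf hg
  diag := diag h𝓕

lemma maxProjIn (hunary : ∀ u : D → ℚ≥0, (∀ d, u d ≤ 1) → (⟨1, fun x => u (x 0)⟩ : WFun D) ∈ 𝓕)
    {F : WFun D} (hF : F ∈ 𝓕) : MaxProjIn (maxClone 𝓕) F.2 := by
  intro i k u hu
  refine ⟨Fintype.card (Fin F.1 → D), fun r => ?_⟩
  have hpps := ((PPSDefinable.atom (.inl hF) id).pow (r + 1)).sum_filter_mul_prod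
    (u := fun l d => u l d ^ (r + 1)) (fun l => hunary _ fun d => pow_le_one' (hu l d) _) i k
  refine ⟨_, hpps, fun s t => ?_⟩
  simp only [comp_id, prod_pow, ← mul_pow, Matrix.cons_val_zero, Matrix.cons_val_one]
  refine ⟨sup_pow_succ_le_sum _ _ r, (sum_pow_le_card_mul_sup_pow _ _ _).trans ?_⟩
  exact mul_le_mul_left (Nat.cast_le.2 (card_le_univ _)) _

end maxClone

end PPS

/-! ### The multimorphisms of `ν(𝓕)` -/

lemma eq_of_triple_eq_pair_singleton {α : Type*} {a b c x y : α}
    (h : ({a, b, c} : Multiset α) = {x, x, y}) :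
    (a = x ∧ b = x ∧ c = y) ∨ (a = x ∧ b = y ∧ c = x) ∨ (a = y ∧ b = x ∧ c = x) := by
  have hperm : [a, b, c] ∈ [x, x, y].permutations' :=
    List.mem_permutations'.2 (Multiset.coe_eq_coe.1 h)
  simp only [List.permutations', List.permutations'Aux, List.flatMap_cons, List.flatMap_nil,
    List.append_nil, List.map_cons, List.map_nil, List.cons_append, List.nil_append, List.mem_cons,
    List.not_mem_nil, List.cons.injEq, and_true, or_false] at hperm
  tauto

section NegLog

/-- The extended negative logarithm, so that `nuF F x = negLog (F x)`. Only its values at arguments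
at most `1` are meaningful: it is truncated to `0` above `1`. -/
noncomputable def negLog (a : ℚ≥0) : ℝ≥0∞ :=
  if a = 0 then ⊤ else ENNReal.ofReal (-Real.log ((a : ℚ) : ℝ))

lemma negLog_antitone : Antitone negLog := by
  intro a b hab
  unfold negLog
  rcases eq_zero_or_pos a with rfl | ha
  · simp
  rw [if_neg ha.ne', if_neg (ha.trans_le hab).ne']
  refine ENNReal.ofReal_le_ofReal (neg_le_neg (Real.log_le_log ?_ ?_))
  · exact_mod_cast ha
  · exact_mod_cast hab

lemma negLog_mul {a b : ℚ≥0} (ha : a ≤ 1) (hb : b ≤ 1) :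
    negLog (a * b) = negLog a + negLog b := by
  unfold negLog
  by_cases ha₀ : a = 0
  · simp [ha₀]
  by_cases hb₀ : b = 0
  · simp [hb₀]
  have hnonneg {c : ℚ≥0} (hc : c ≤ 1) : 0 ≤ -Real.log ((c : ℚ) : ℝ) :=
    neg_nonneg.2 (Real.log_nonpos (by positivity) (by exact_mod_cast hc))
  rw [if_neg ha₀, if_neg hb₀, if_neg (mul_ne_zero ha₀ hb₀),
    ← ENNReal.ofReal_add (hnonneg ha) (hnonneg hb), ← neg_add,
    ← Real.log_mul (by exact_mod_cast ha₀) (by exact_mod_cast hb₀)]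
  norm_cast

lemma negLog_prod {α : Type*} (s : Finset α) {a : α → ℚ≥0} (ha : ∀ i, a i ≤ 1) :
    negLog (∏ i ∈ s, a i) = ∑ i ∈ s, negLog (a i) := by
  induction s using Finset.cons_induction with
  | empty => simp [negLog]
  | cons i s _ ih => rw [prod_cons, sum_cons, negLog_mul (ha i) (prod_le_one' fun j _ => ha j), ih]

lemma isMultimorphism_nuF_of_prod_le {D : Type} {k r : ℕ} {ρ : Fin k → (Fin k → D) → D}
    {F : (Fin r → D) → ℚ≥0} (hF1 : ∀ z, F z ≤ 1)
    (h : ∀ x : Fin k → Fin r → D, ∏ i, F (x i) ≤ ∏ i, F fun l => ρ i fun j => x j l) :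
    IsMultimorphism ρ (nuF F) := by
  intro x
  calc ∑ i, negLog (F fun l => ρ i fun j => x j l)
      = negLog (∏ i, F fun l => ρ i fun j => x j l) := (negLog_prod _ fun _ => hF1 _).symm
    _ ≤ negLog (∏ i, F (x i)) := negLog_antitone (h x)
    _ = ∑ i, negLog (F (x i)) := negLog_prod _ fun _ => hF1 _

end NegLog

section Multimorphisms

variable {D : Type} [Fintype D] {Γ : Type*} [LinearOrderedCommGroupWithZero Γ]
  {C : Set (D → D → Γ)}

lemma conservativeTuple_infOp_supOp (C : Set (D → D → Γ)) :
    ConservativeTuple (pairTuple (infOp C) (supOp C)) := by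
  intro x
  change ({x 0, x 1} : Multiset D) = {infOp C (x 0) (x 1), supOp C (x 0) (x 1)}
  unfold infOp supOp
  split_ifs
  · exact Multiset.pair_comm _ _
  · rfl

variable [DecidableEq D]

lemma conservativeTuple_majOp₁_majOp₂_minOp [DenselyOrdered Γ] (hC : IsLogSupermodularClone C) :
    ConservativeTuple (tripleTuple (majOp₁ C) (majOp₂ C) (minOp C)) := by
  intro x
  change ({x 0, x 1, x 2} : Multiset D) =
    {majOp₁ C (x 0) (x 1) (x 2), majOp₂ C (x 0) (x 1) (x 2), minOp C (x 0) (x 1) (x 2)}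
  unfold majOp₁ majOp₂ minOp
  by_cases h : Separated C (x 0) (x 1) (x 2)
  · simp only [h, h.asymm hC, if_true, if_false]
    exact Multiset.coe_eq_coe.2 (List.reverse_perm [x 0, x 1, x 2]).symm
  · by_cases h' : Separated C (x 1) (x 0) (x 2)
    · simp only [h, h', if_true, if_false, Multiset.pair_comm (x 1)]
    · simp only [h, h', if_false]

lemma majOp_minOp_of_selfLinked [DenselyOrdered Γ] (hC : IsLogSupermodularClone C) {a b c x y : D}
    (hxy : SelfLinked C x y) (h : ({a, b, c} : Multiset D) = {x, x, y}) :
    majOp₁ C a b c = x ∧ majOp₂ C a b c = x ∧ minOp C a b c = y := by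
  have hsep : Separated C y x x := .of_selfLinked hC hxy
  have hleft (t : D) : ¬ Separated C x x t := fun h => h.ne rfl
  have hright (t : D) : ¬ Separated C x t x := fun h => hleft t (Separated.comm.1 h)
  rcases eq_of_triple_eq_pair_singleton h with ⟨rfl, rfl, rfl⟩ | ⟨rfl, rfl, rfl⟩ |
    ⟨rfl, rfl, rfl⟩ <;>
    simp [majOp₁, majOp₂, minOp, hsep, hleft, hright]

variable {C : Set (D → D → ℚ≥0)} {n : ℕ} {F : (Fin n → D) → ℚ≥0}

lemma isMultimorphism_infOp_supOp (hC : IsLogSupermodularClone C) (hF1 : ∀ z, F z ≤ 1)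
    (hF : MaxProjIn C F) : IsMultimorphism (pairTuple (infOp C) (supOp C)) (nuF F) := by
  refine isMultimorphism_nuF_of_prod_le hF1 fun x => ?_
  rw [Fin.prod_univ_two, Fin.prod_univ_two]
  exact mul_le_infOp_mul_supOp hC hF (x 0) (x 1)

lemma isMultimorphism_majOp₁_majOp₂_minOp (hC : IsLogSupermodularClone C) (hF1 : ∀ z, F z ≤ 1)
    (hF : MaxProjIn C F) :
    IsMultimorphism (tripleTuple (majOp₁ C) (majOp₂ C) (minOp C)) (nuF F) := by
  refine isMultimorphism_nuF_of_prod_le hF1 fun x => ?_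
  rw [Fin.prod_univ_three, Fin.prod_univ_three]
  exact mul_le_majOp₁_mul_majOp₂_mul_minOp hC hF1 hF (x 0) (x 1) (x 2)

end Multimorphisms

end STPMJN

open STPMJN

/-- If `𝓕` contains all unary `[0,1]∩ℚ`-valued weight functions,
all of its weight functions take values in `[0,1]∩ℚ`, and `𝓕` is weakly
log-supermodular, then `ν(𝓕)` has an STP/MJN multimorphism. -/
theorem hasSTPMJN_of_weaklyLogSupermodular
    {D : Type} [Fintype D] [DecidableEq D] (hD : 2 ≤ Fintype.card D)
    (𝓕 : Set (WFun D))
    (hval : ∀ F ∈ 𝓕, ∀ x, F.2 x ≤ 1)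
    (hcons : ∀ u : D → ℚ≥0, (∀ d, u d ≤ 1) → (⟨1, fun x => u (x 0)⟩ : WFun D) ∈ 𝓕)
    (hwlsm : WeaklyLogSupermodular 𝓕) :
    HasSTPMJN (nuSet 𝓕) := by
  let C := maxClone 𝓕
  have hC : IsLogSupermodularClone C := maxClone.isLogSupermodularClone hwlsm hcons
  refine ⟨infOp C, supOp C, majOp₁ C, majOp₂ C, minOp C, {p | ¬ SelfLinked C p.1 p.2},
    fun a b h h' => h h'.symm, conservativeTuple_infOp_supOp C,
    conservativeTuple_majOp₁_majOp₂_minOp hC, ?_, ?_,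
    fun a b h => ⟨infOp_comm hC h, supOp_comm hC h⟩,
    fun a b c x y h _ hM => majOp_minOp_of_selfLinked hC (not_not.1 hM) h⟩
  · rintro _ ⟨F, hF, rfl⟩
    exact isMultimorphism_infOp_supOp hC (hval F hF) (maxClone.maxProjIn hcons hF)
  · rintro _ ⟨F, hF, rfl⟩
    exact isMultimorphism_majOp₁_majOp₂_minOp hC (hval F hF) (maxClone.maxProjIn hcons hF)
end

section
/- If a valued constraint language Φ over a finite domain D is conservative (contains every unary cost function D → ℝ̄≥0) and weakly submodular, then the relational clone Γ = ⟨Rel(Φ)⟩_v has a majority polymorphism. -/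
open scoped NNRat ENNReal

/-- The crisp cost function `Rel(f)` underlying a cost function `f`:
value `0` where `f` is finite, `∞` elsewhere. -/
noncomputable def RelC {D : Type} {k : ℕ} (f : (Fin k → D) → ℝ≥0∞) :
    (Fin k → D) → ℝ≥0∞ :=
  fun x => if f x = ⊤ then ⊤ else 0

/-- The crisp constraint language `Rel(Φ)` underlying `Φ`. -/
def RelSet {D : Type} (Φ : Set (CFun D)) : Set (CFun D) :=
  {g | ∃ f ∈ Φ, g = ⟨f.1, RelC f.2⟩}

/-!
Call a relation definable if it is the support of a function in `⟨Φ⟩_v`; these are the relations in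
`⟨Rel(Φ)⟩_v`. They are closed under the primitive positive operations, so the set of ternary
polymorphisms, being an intersection of definable relations on `D ^ (D ^ 3)`, is itself definable.

Weak submodularity enters once: if a definable ternary relation contains `(b₁, a₂, a₃)`,
`(a₁, b₂, a₃)` and `(a₁, a₂, b₃)`, then it contains `(a₁, a₂, a₃)`. Otherwise three copies of the
defining function, chained together with a large penalty `w` on deviations from `a₂` and `a₃`, give
a binary `f` with `f (a₁, a₁)` finite, `f (a₁, a₁) + f (b₁, b₁) ≥ 3w` and
`f (a₁, b₁) + f (b₁, a₁) ≤ 2w + O(1)`.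

As in the Baker–Pixley theorem, it follows by induction that a definable relation is determined by
its binary projections. On any two triples with a repeated entry some coordinate projection, which
is a polymorphism, returns the repeated entry of both, so some polymorphism does so on all of them.
-/

theorem append_eq_sumElim_comp {α : Type*} {m n : ℕ} (x : Fin m → α) (y : Fin n → α) :
    Fin.append x y = Sum.elim x y ∘ finSumFinEquiv.symm := by
  funext i
  refine Fin.addCases (fun j => ?_) (fun j => ?_) i <;> simp

section PsmDefinable

variable {D : Type} [DecidableEq D] {Φ : Set (CFun D)} {ι γ κ : Type}

/-- The atomic formulas over `Φ ∪ {eq}` with variables in `ι`, as cost functions on `ι → D`. -/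
def atomicFormulas (Φ : Set (CFun D)) (ι : Type) : Set ((ι → D) → ℝ≥0∞) :=
  {h | ∃ c ∈ Φ ∪ {⟨2, eqC D⟩}, ∃ σ : Fin c.1 → ι, h = fun x => c.2 (x ∘ σ)}

/-- The finite sums of atomic formulas over `Φ ∪ {eq}` with variables in `ι`, that is, the
quantifier-free psm-formulas. -/
def atomicSums (Φ : Set (CFun D)) (ι : Type) : AddSubmonoid ((ι → D) → ℝ≥0∞) :=
  AddSubmonoid.closure (atomicFormulas Φ ι)

/-- Membership in the valued clone `⟨Φ⟩_v`, with free variables in an arbitrary type `ι` and bound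
variables in an arbitrary finite type `κ`; in `InVClone` both are of the form `Fin n`. -/
def PsmDefinable (Φ : Set (CFun D)) (f : (ι → D) → ℝ≥0∞) : Prop :=
  ∃ (κ : Type) (_ : Finite κ), ∃ h ∈ atomicSums Φ (ι ⊕ κ),
    ∀ x, f x = ⨅ y : κ → D, h (Sum.elim x y)

theorem comp_mem_atomicSums {h : (ι → D) → ℝ≥0∞} (hh : h ∈ atomicSums Φ ι) (s : ι → γ) :
    (fun x : γ → D => h (x ∘ s)) ∈ atomicSums Φ γ := by
  induction hh using AddSubmonoid.closure_induction with
  | mem h hh =>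
    obtain ⟨c, hc, σ, rfl⟩ := hh
    exact AddSubmonoid.subset_closure ⟨c, hc, s ∘ σ, rfl⟩
  | zero => exact zero_mem _
  | add h h' _ _ ih ih' => exact add_mem ih ih'

namespace PsmDefinable

theorem of_mem_atomicSums {h : (ι → D) → ℝ≥0∞} (hh : h ∈ atomicSums Φ ι) : PsmDefinable Φ h :=
  ⟨Empty, inferInstance, _, comp_mem_atomicSums hh Sum.inl, fun x => by simp⟩

theorem of_mem {c : CFun D} (hc : c ∈ Φ ∪ {⟨2, eqC D⟩}) : PsmDefinable Φ c.2 :=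
  of_mem_atomicSums (AddSubmonoid.subset_closure ⟨c, hc, id, rfl⟩)

theorem comp {f : (ι → D) → ℝ≥0∞} (hf : PsmDefinable Φ f) (s : ι → γ) :
    PsmDefinable Φ fun x : γ → D => f (x ∘ s) := by
  obtain ⟨κ, hκ, h, hh, hfh⟩ := hf
  refine ⟨κ, hκ, _, comp_mem_atomicSums hh (Sum.map s id), fun x => ?_⟩
  simp only [hfh, Sum.elim_comp_map, Function.comp_id]

theorem iInf [Finite κ] {f : (ι ⊕ κ → D) → ℝ≥0∞} (hf : PsmDefinable Φ f) :
    PsmDefinable Φ fun x : ι → D => ⨅ y : κ → D, f (Sum.elim x y) := by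
  obtain ⟨κ', _, h, hh, hfh⟩ := hf
  refine ⟨κ ⊕ κ', inferInstance, _, comp_mem_atomicSums hh (Equiv.sumAssoc ι κ κ'), fun x => ?_⟩
  simp_rw [hfh]
  rw [← iInf_prod (f := fun p : (κ → D) × (κ' → D) => h (Sum.elim (Sum.elim x p.1) p.2))]
  refine Equiv.iInf_congr (Equiv.sumArrowEquivProdArrow κ κ' D).symm fun p => congrArg h ?_
  ext ((i | k) | k') <;> rfl

theorem add {f g : (ι → D) → ℝ≥0∞} (hf : PsmDefinable Φ f) (hg : PsmDefinable Φ g) :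
    PsmDefinable Φ fun x => f x + g x := by
  obtain ⟨κ, _, h, hh, hfh⟩ := hf
  obtain ⟨κ', _, h', hh', hgh'⟩ := hg
  refine ⟨κ ⊕ κ', inferInstance, _, add_mem (comp_mem_atomicSums hh (Sum.map id Sum.inl))
    (comp_mem_atomicSums hh' (Sum.map id Sum.inr)), fun x => ?_⟩
  simp_rw [hfh, hgh', ENNReal.iInf_add, ENNReal.add_iInf]
  rw [← iInf_prod (f := fun p : (κ → D) × (κ' → D) => h (Sum.elim x p.1) + h' (Sum.elim x p.2))]
  refine Equiv.iInf_congr (Equiv.sumArrowEquivProdArrow κ κ' D).symm fun p => ?_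
  simp only [Pi.add_apply, Sum.elim_comp_map, Function.comp_id]
  rfl

theorem sum {J : Type*} (s : Finset J) {f : J → (ι → D) → ℝ≥0∞}
    (hf : ∀ j ∈ s, PsmDefinable Φ (f j)) : PsmDefinable Φ fun x => ∑ j ∈ s, f j x := by
  simpa only [Finset.sum_fn] using
    Finset.sum_induction f (PsmDefinable Φ) (fun _ _ => add) (of_mem_atomicSums (zero_mem _)) hf

theorem inVClone [Fintype D] {n : ℕ} {f : (Fin n → D) → ℝ≥0∞} (hf : PsmDefinable Φ f) :
    InVClone Φ f := by
  obtain ⟨κ, _, h, hh, hfh⟩ := hf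
  obtain ⟨l, hl, rfl⟩ := AddSubmonoid.exists_list_of_mem_closure hh
  choose c hc σ hσ using fun j : Fin l.length => hl l[j] (List.getElem_mem j.2)
  let e := Finite.equivFin κ
  refine ⟨Nat.card κ, l.length, fun j => (c j).1, fun j => (c j).2,
    fun j => finSumFinEquiv ∘ Sum.map id e ∘ σ j, hc, fun x => ?_⟩
  rw [hfh]
  refine Equiv.iInf_congr (e.arrowCongr (Equiv.refl D)) fun y => ?_
  rw [← Fin.sum_univ_getElem l, Finset.sum_apply]
  refine Finset.sum_congr rfl fun j _ => ?_
  rw [← Fin.getElem_fin, hσ, append_eq_sumElim_comp]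
  refine congrArg (c j).2 (funext fun i => ?_)
  rcases hv : σ j i <;> simp [hv]

end PsmDefinable

end PsmDefinable

section Conservative

variable {D : Type} [DecidableEq D] {Φ : Set (CFun D)} {ι γ κ : Type}

/-- A valued constraint language is conservative if it contains every unary cost function. -/
def Conservative (Φ : Set (CFun D)) : Prop :=
  ∀ u : D → ℝ≥0∞, (⟨1, fun x => u (x 0)⟩ : CFun D) ∈ Φ

/-- The unary cost function charging `w` for every deviation from `c`; for `w = ⊤` it is the crisp
constant `c`. -/
def penalty (c : D) (w : ℝ≥0∞) (t : D) : ℝ≥0∞ := if t = c then 0 else w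

@[simp]
theorem penalty_self (c : D) (w : ℝ≥0∞) : penalty c w c = 0 := if_pos rfl

theorem penalty_of_ne {c t : D} (h : t ≠ c) (w : ℝ≥0∞) : penalty c w t = w := if_neg h

theorem penalty_le (c : D) (w : ℝ≥0∞) (t : D) : penalty c w t ≤ w := by
  unfold penalty
  split_ifs <;> simp

theorem penalty_top_ne_top_iff {c t : D} : penalty c ⊤ t ≠ ⊤ ↔ t = c := by
  simp [penalty]

theorem iInf_add_sum_penalty_top [Fintype κ] (f : (κ → D) → ℝ≥0∞) (c : κ → D) :
    ⨅ y, (f y + ∑ k, penalty (c k) ⊤ (y k)) = f c := by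
  refine le_antisymm ((iInf_le _ c).trans (by simp)) (le_iInf fun y => ?_)
  by_cases hy : y = c
  · simp [hy]
  · obtain ⟨k, hk⟩ := Function.ne_iff.mp hy
    have hsum : ∑ k, penalty (c k) ⊤ (y k) = ⊤ :=
      ENNReal.sum_eq_top.mpr ⟨k, Finset.mem_univ k, penalty_of_ne hk ⊤⟩
    simp [hsum]

theorem Conservative.psmDefinable (hΦ : Conservative Φ) (u : D → ℝ≥0∞) (i : ι) :
    PsmDefinable Φ fun x : ι → D => u (x i) :=
  (PsmDefinable.of_mem (Or.inl (hΦ u))).comp fun _ => i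

theorem PsmDefinable.comp_sumElim_const [Finite D] (hΦ : Conservative Φ) {f : (ι → D) → ℝ≥0∞}
    (hf : PsmDefinable Φ f) (s : ι → γ ⊕ D) :
    PsmDefinable Φ fun x : γ → D => f (Sum.elim x id ∘ s) := by
  have := Fintype.ofFinite D
  have key := ((hf.comp s).add (PsmDefinable.sum Finset.univ fun d _ =>
    hΦ.psmDefinable (penalty d ⊤) (Sum.inr d))).iInf
  convert key using 2 with x
  exact (iInf_add_sum_penalty_top (fun y => f (Sum.elim x y ∘ s)) id).symm

end Conservative

section ChainCost

variable {D : Type} [DecidableEq D]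

/-- The gadget turning a ternary cost function `F` that is infinite at `(a₁, a₂, a₃)` into a binary
one in `p, q`, along the path `p`, `s`, `t`, `q`. The variables `r, s, t` are to be minimised out;
each pays `w` unless it is at its `a`-value. -/
def chainCost (F : D → D → D → ℝ≥0∞) (a₁ a₂ a₃ : D) (w : ℝ≥0∞) (p q r s t : D) : ℝ≥0∞ :=
  F p s r + F a₁ s t + F q a₂ t + (penalty a₃ w r + penalty a₂ w s + penalty a₃ w t)

variable {F : D → D → D → ℝ≥0∞} {a₁ a₂ a₃ : D}

theorem le_chainCost (hF : F a₁ a₂ a₃ = ⊤) (w : ℝ≥0∞) (p q r s t : D) :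
    w ≤ chainCost F a₁ a₂ a₃ w p q r s t := by
  by_cases hs : s = a₂
  · by_cases ht : t = a₃
    · simp [chainCost, hs, ht, hF]
    · rw [chainCost, penalty_of_ne ht]
      exact le_add_left le_add_self
  · rw [chainCost, penalty_of_ne hs]
    exact le_add_left (le_add_right le_add_self)

theorem add_self_le_chainCost (hF : F a₁ a₂ a₃ = ⊤) (w : ℝ≥0∞) (r s t : D) :
    w + w ≤ chainCost F a₁ a₂ a₃ w a₁ a₁ r s t := by
  by_cases ht : t = a₃
  · simp [chainCost, ht, hF]
  have hrs : w ≤ F a₁ s r + (penalty a₃ w r + penalty a₂ w s) := by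
    by_cases hr : r = a₃
    · by_cases hs : s = a₂
      · simp [hr, hs, hF]
      · rw [penalty_of_ne hs]
        exact le_add_left le_add_self
    · rw [penalty_of_ne hr]
      exact le_add_left le_self_add
  calc w + w ≤ F a₁ s r + (penalty a₃ w r + penalty a₂ w s) + w := by gcongr
    _ ≤ F a₁ s r + (penalty a₃ w r + penalty a₂ w s) + w + (F a₁ s t + F a₁ a₂ t) := le_self_add
    _ = chainCost F a₁ a₂ a₃ w a₁ a₁ r s t := by
      rw [chainCost, penalty_of_ne ht]
      ring

variable {Φ : Set (CFun D)}

theorem psmDefinable_iInf_chainCost [Finite D] (hΦ : Conservative Φ)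
    (hF : PsmDefinable Φ fun x : Fin 3 → D => F (x 0) (x 1) (x 2)) (a₁ a₂ a₃ : D) (w : ℝ≥0∞) :
    PsmDefinable Φ fun x : Fin 2 → D =>
      ⨅ y : Fin 3 → D, chainCost F a₁ a₂ a₃ w (x 0) (x 1) (y 0) (y 1) (y 2) := by
  let p : Fin 2 ⊕ Fin 3 := .inl 0
  let q : Fin 2 ⊕ Fin 3 := .inl 1
  let r : Fin 2 ⊕ Fin 3 := .inr 0
  let s : Fin 2 ⊕ Fin 3 := .inr 1
  let t : Fin 2 ⊕ Fin 3 := .inr 2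
  have hpsr := hF.comp ![p, s, r]
  have hast := hF.comp_sumElim_const hΦ ![.inr a₁, .inl s, .inl t]
  have hqat := hF.comp_sumElim_const hΦ ![.inl q, .inr a₂, .inl t]
  have hr := hΦ.psmDefinable (penalty a₃ w) r
  have hs := hΦ.psmDefinable (penalty a₂ w) s
  have ht := hΦ.psmDefinable (penalty a₃ w) t
  exact (((hpsr.add hast).add hqat).add ((hr.add hs).add ht)).iInf

theorem WeaklySubmodular.ne_top_of_single_deviations [Fintype D] (hws : WeaklySubmodular Φ)
    (hΦ : Conservative Φ) (hF : PsmDefinable Φ fun x : Fin 3 → D => F (x 0) (x 1) (x 2))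
    {b₁ b₂ b₃ : D} (h₁ : F b₁ a₂ a₃ ≠ ⊤) (h₂ : F a₁ b₂ a₃ ≠ ⊤) (h₃ : F a₁ a₂ b₃ ≠ ⊤) :
    F a₁ a₂ a₃ ≠ ⊤ := by
  intro hFa
  let N := 2 * (F b₁ a₂ a₃ + F a₁ b₂ a₃ + F a₁ a₂ b₃)
  have hN : N ≠ ⊤ := by simp [N, ENNReal.mul_eq_top, h₁, h₂, h₃]
  let w := N + 1
  have hw : w ≠ ⊤ := by simp [w, hN]
  let f (p q : D) : ℝ≥0∞ := ⨅ y : Fin 3 → D, chainCost F a₁ a₂ a₃ w p q (y 0) (y 1) (y 2)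
  have hf_le (p q r s t : D) : f p q ≤ chainCost F a₁ a₂ a₃ w p q r s t := iInf_le _ ![r, s, t]
  have haa : w + w ≤ f a₁ a₁ := le_iInf fun y => add_self_le_chainCost hFa w _ _ _
  have hbb : w ≤ f b₁ b₁ := le_iInf fun y => le_chainCost hFa w _ _ _ _ _
  have hab : f a₁ b₁ ≤ F a₁ b₂ a₃ + F a₁ b₂ a₃ + F b₁ a₂ a₃ + w :=
    (hf_le a₁ b₁ a₃ b₂ a₃).trans (by simp [chainCost, add_le_add_right, penalty_le])
  have hba : f b₁ a₁ ≤ F b₁ a₂ a₃ + F a₁ a₂ b₃ + F a₁ a₂ b₃ + w :=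
    (hf_le b₁ a₁ a₃ a₂ b₃).trans (by simp [chainCost, add_le_add_right, penalty_le])
  have haa_ne_top : f a₁ a₁ ≠ ⊤ := by
    refine ne_top_of_le_ne_top ?_ (hf_le a₁ a₁ b₃ a₂ b₃)
    have hb₃ : penalty a₃ w b₃ ≠ ⊤ := ne_top_of_le_ne_top hw (penalty_le a₃ w b₃)
    simp [chainCost, h₃, hb₃]
  rcases hws _ (psmDefinable_iInf_chainCost hΦ hF a₁ a₂ a₃ w).inVClone a₁ b₁ with hsub | ⟨htop, -⟩
  · have hsum : w + (w + w) ≤ N + (w + w) := calc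
      w + (w + w) = w + w + w := by ring
      _ ≤ f a₁ a₁ + f b₁ b₁ := add_le_add haa hbb
      _ ≤ f a₁ b₁ + f b₁ a₁ := hsub
      _ ≤ _ := add_le_add hab hba
      _ = N + (w + w) := by ring
    have hwN : w ≤ N := (ENNReal.add_le_add_iff_right (by simp [hw])).mp hsum
    exact (ENNReal.lt_add_right hN one_ne_zero).not_ge hwN
  · exact haa_ne_top htop

end ChainCost

section SupportDefinable

variable {D : Type} [DecidableEq D] {Φ : Set (CFun D)} {ι γ κ : Type}

/-- `R` is the support of a cost function in the valued clone of `Φ`, or equivalently a relation in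
`⟨Rel(Φ)⟩_v`. -/
def SupportDefinable (Φ : Set (CFun D)) (R : Set (ι → D)) : Prop :=
  ∃ f : (ι → D) → ℝ≥0∞, PsmDefinable Φ f ∧ R = {x | f x ≠ ⊤}

namespace SupportDefinable

theorem of_mem {c : CFun D} (hc : c ∈ Φ ∪ {⟨2, eqC D⟩}) :
    SupportDefinable Φ {x | c.2 x ≠ ⊤} :=
  ⟨c.2, .of_mem hc, rfl⟩

theorem setOf_apply_eq_apply (i j : ι) : SupportDefinable Φ {x : ι → D | x i = x j} :=
  ⟨_, (PsmDefinable.of_mem (Or.inr rfl)).comp ![i, j], by ext x; simp [eqC]⟩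

theorem setOf_apply_eq_const (hΦ : Conservative Φ) (i : ι) (c : D) :
    SupportDefinable Φ {x : ι → D | x i = c} :=
  ⟨_, hΦ.psmDefinable (penalty c ⊤) i, Set.ext fun _ => penalty_top_ne_top_iff.symm⟩

theorem preimage_comp {R : Set (ι → D)} (hR : SupportDefinable Φ R) (s : ι → γ) :
    SupportDefinable Φ {x : γ → D | x ∘ s ∈ R} := by
  obtain ⟨f, hf, rfl⟩ := hR
  exact ⟨_, hf.comp s, rfl⟩

theorem inter {R Q : Set (ι → D)} (hR : SupportDefinable Φ R) (hQ : SupportDefinable Φ Q) :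
    SupportDefinable Φ (R ∩ Q) := by
  obtain ⟨f, hf, rfl⟩ := hR
  obtain ⟨g, hg, rfl⟩ := hQ
  exact ⟨_, hf.add hg, by ext x; simp⟩

theorem iInter {J : Type*} [Finite J] {R : J → Set (ι → D)}
    (hR : ∀ j, SupportDefinable Φ (R j)) : SupportDefinable Φ (⋂ j, R j) := by
  have := Fintype.ofFinite J
  choose f hf hRf using hR
  exact ⟨_, .sum Finset.univ fun j _ => hf j, by ext x; simp [hRf]⟩

theorem sInter [Finite D] [Finite ι] {𝓡 : Set (Set (ι → D))}
    (h𝓡 : ∀ R ∈ 𝓡, SupportDefinable Φ R) : SupportDefinable Φ (⋂₀ 𝓡) :=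
  Set.sInter_eq_iInter ▸ iInter fun R : 𝓡 => h𝓡 R R.2

theorem exists_sumElim [Finite κ] {R : Set (ι ⊕ κ → D)} (hR : SupportDefinable Φ R) :
    SupportDefinable Φ {x : ι → D | ∃ y : κ → D, Sum.elim x y ∈ R} := by
  obtain ⟨f, hf, rfl⟩ := hR
  exact ⟨_, hf.iInf, by ext x; simp⟩

theorem image_comp [Finite ι] [Finite κ] {R : Set (ι → D)} (hR : SupportDefinable Φ R)
    (s : κ → ι) : SupportDefinable Φ ((fun t : ι → D => t ∘ s) '' R) := by
  have key := ((hR.preimage_comp Sum.inr).inter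
    (iInter fun k : κ => setOf_apply_eq_apply (Sum.inr (s k)) (Sum.inl k))).exists_sumElim
  convert key using 1
  ext x
  simp [funext_iff]

theorem setOf_eqOn (hΦ : Conservative Φ) (a : ι → D) {S : Set ι} (hS : S.Finite) :
    SupportDefinable Φ {x : ι → D | Set.EqOn x a S} := by
  have := hS.to_subtype
  convert iInter fun i : S => setOf_apply_eq_const (Φ := Φ) hΦ (i : ι) (a i)
  ext x
  simp [Set.EqOn]

theorem of_mem_relSet {c : CFun D} (hc : c ∈ RelSet Φ ∪ {⟨2, eqC D⟩}) :
    SupportDefinable Φ {x | c.2 x ≠ ⊤} := by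
  rcases hc with ⟨f, hf, rfl⟩ | hc
  · simpa [RelC] using of_mem (Or.inl hf : f ∈ Φ ∪ {⟨2, eqC D⟩})
  · exact of_mem (Or.inr hc)

theorem of_inVClone_relSet [Fintype D] {n : ℕ} {g : (Fin n → D) → ℝ≥0∞}
    (hg : InVClone (RelSet Φ) g) : SupportDefinable Φ {x | g x ≠ ⊤} := by
  obtain ⟨k, m, ar, r, sc, hr, hgr⟩ := hg
  have key := (iInter fun j => ((of_mem_relSet (hr j)).preimage_comp
    (finSumFinEquiv.symm ∘ sc j))).exists_sumElim
  convert key using 1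
  ext x
  simp [hgr, append_eq_sumElim_comp, Function.comp_def]

end SupportDefinable

end SupportDefinable

section Decomposition

theorem exists_eq_or_eq_of_card_le_two {α : Type*} {S : Finset α} (hne : S.Nonempty)
    (hS : S.card ≤ 2) : ∃ i ∈ S, ∃ j ∈ S, ∀ k ∈ S, k = i ∨ k = j := by
  classical
  have hpos := hne.card_pos
  rcases (show S.card = 1 ∨ S.card = 2 by omega) with h | h
  · obtain ⟨i, rfl⟩ := Finset.card_eq_one.mp h
    simp
  · obtain ⟨i, j, -, rfl⟩ := Finset.card_eq_two.mp h
    exact ⟨i, by simp, j, by simp, by simp⟩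

variable {D : Type} [Fintype D] [DecidableEq D] {Φ : Set (CFun D)} {ι : Type}

theorem SupportDefinable.mem_of_forall_fin_three (hΦ : Conservative Φ) (hws : WeaklySubmodular Φ)
    {Q : Set (Fin 3 → D)} (hQ : SupportDefinable Φ Q) {a : Fin 3 → D}
    (h : ∀ l, ∃ x ∈ Q, ∀ m ≠ l, x m = a m) : a ∈ Q := by
  obtain ⟨f, hf, rfl⟩ := hQ
  have eta (x : Fin 3 → D) : ![x 0, x 1, x 2] = x := FinVec.etaExpand_eq x
  have hF : PsmDefinable Φ fun x : Fin 3 → D => f ![x 0, x 1, x 2] := by simpa only [eta] using hf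
  obtain ⟨x, hx, hxa⟩ := h 0
  obtain ⟨y, hy, hya⟩ := h 1
  obtain ⟨z, hz, hza⟩ := h 2
  rw [← eta x, hxa 1 (by decide), hxa 2 (by decide)] at hx
  rw [← eta y, hya 0 (by decide), hya 2 (by decide)] at hy
  rw [← eta z, hza 0 (by decide), hza 1 (by decide)] at hz
  rw [← eta a]
  exact hws.ne_top_of_single_deviations (F := fun p q r => f ![p, q, r]) hΦ hF hx hy hz

theorem SupportDefinable.exists_eqOn_of_pairs [Finite ι] (hΦ : Conservative Φ)
    (hws : WeaklySubmodular Φ) {R : Set (ι → D)} (hR : SupportDefinable Φ R) (hne : R.Nonempty)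
    (a : ι → D) (S : Finset ι) (hpair : ∀ i ∈ S, ∀ j ∈ S, ∃ t ∈ R, t i = a i ∧ t j = a j) :
    ∃ t ∈ R, Set.EqOn t a S := by
  classical
  induction S using Finset.strongInduction with | H S ih
  rcases S.eq_empty_or_nonempty with rfl | hSne
  · obtain ⟨t, ht⟩ := hne
    exact ⟨t, ht, by simp⟩
  rcases Nat.lt_or_ge S.card 3 with hcard | hcard
  · obtain ⟨i, hi, j, hj, hS⟩ := exists_eq_or_eq_of_card_le_two hSne (by omega)
    obtain ⟨t, ht, hti, htj⟩ := hpair i hi j hj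
    exact ⟨t, ht, fun k hk => by rcases hS k hk with rfl | rfl <;> assumption⟩
  obtain ⟨v⟩ : Nonempty (Fin 3 ↪ S) := Function.Embedding.nonempty_of_card_le (by simpa)
  let s : Fin 3 → ι := fun l => v l
  let T : Set ι := S \ Set.range s
  have hQ : SupportDefinable Φ ((fun t : ι → D => t ∘ s) '' (R ∩ {t | Set.EqOn t a T})) :=
    (hR.inter (setOf_eqOn hΦ a T.toFinite)).image_comp s
  obtain ⟨t, ⟨ht, htT⟩, hts⟩ := hQ.mem_of_forall_fin_three hΦ hws (a := a ∘ s) fun l => by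
    obtain ⟨t, ht, hta⟩ := ih (S.erase (s l)) (Finset.erase_ssubset (v l).2) fun i hi j hj =>
      hpair i (Finset.mem_of_mem_erase hi) j (Finset.mem_of_mem_erase hj)
    refine ⟨t ∘ s, ⟨t, ⟨ht, fun i hi => hta ?_⟩, rfl⟩, fun m hm => hta ?_⟩
    · exact Finset.mem_erase.mpr ⟨fun h => hi.2 ⟨l, h.symm⟩, hi.1⟩
    · exact Finset.mem_erase.mpr
        ⟨fun h => hm (v.injective (Subtype.ext h)), (v m).2⟩
  refine ⟨t, ht, fun i hi => ?_⟩
  by_cases his : i ∈ Set.range s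
  · obtain ⟨l, rfl⟩ := his
    exact congrFun hts l
  · exact htT ⟨hi, his⟩

end Decomposition

section Polymorphism

variable {D : Type} [DecidableEq D] {Φ : Set (CFun D)} {ω : Type}

/-- The operation `ρ`, with arguments indexed by `ω`, preserves every relation in `⟨Rel(Φ)⟩_v`. -/
def IsPolymorphism (Φ : Set (CFun D)) (ρ : (ω → D) → D) : Prop :=
  ∀ (ι : Type) (R : Set (ι → D)), SupportDefinable Φ R →
    ∀ X : ω → ι → D, (∀ l, X l ∈ R) → (fun i => ρ fun l => X l i) ∈ R

theorem isPolymorphism_eval (l : ω) : IsPolymorphism Φ fun p : ω → D => p l :=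
  fun _ _ _ _ hX => hX l

theorem setOf_isPolymorphism_eq_sInter :
    {ρ : (ω → D) → D | IsPolymorphism Φ ρ} =
      ⋂₀ {R | SupportDefinable Φ R ∧ ∀ l, (fun p : ω → D => p l) ∈ R} := by
  ext ρ
  constructor
  · rintro hρ R ⟨hR, hproj⟩
    exact hρ _ R hR (fun l p => p l) hproj
  · intro hρ ι R hR X hX
    exact hρ _ ⟨hR.preimage_comp fun i l => X l i, hX⟩

theorem supportDefinable_setOf_isPolymorphism [Finite D] [Finite ω] :
    SupportDefinable Φ {ρ : (ω → D) → D | IsPolymorphism Φ ρ} :=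
  setOf_isPolymorphism_eq_sInter (Φ := Φ) (ω := ω) ▸ .sInter fun _ hR => hR.1

/-- The value a triple takes at least twice. On a triple with distinct entries it is the junk value
`p 2`. -/
def majorityValue (p : Fin 3 → D) : D := if p 0 = p 1 then p 0 else p 2

theorem majorityValue_eq_of_apply_eq {p : Fin 3 → D} {i j : Fin 3} (hij : i ≠ j)
    (hp : p i = p j) : majorityValue p = p i := by
  unfold majorityValue
  fin_cases i <;> fin_cases j <;> simp_all

theorem exists_apply_eq_majorityValue {p q : Fin 3 → D} (hp : ¬ p.Injective)
    (hq : ¬ q.Injective) : ∃ l, p l = majorityValue p ∧ q l = majorityValue q := by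
  obtain ⟨i, j, hpij, hij⟩ := Function.not_injective_iff.mp hp
  obtain ⟨k, l, hqkl, hkl⟩ := Function.not_injective_iff.mp hq
  have hpi := majorityValue_eq_of_apply_eq hij hpij
  have hqk := majorityValue_eq_of_apply_eq hkl hqkl
  have hmeet : i = k ∨ i = l ∨ j = k ∨ j = l := by omega
  rcases hmeet with rfl | rfl | rfl | rfl
  · exact ⟨i, hpi.symm, hqk.symm⟩
  · exact ⟨i, hpi.symm, hqkl ▸ hqk.symm⟩
  · exact ⟨j, hpij ▸ hpi.symm, hqk.symm⟩
  · exact ⟨j, hpij ▸ hpi.symm, hqkl ▸ hqk.symm⟩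

theorem exists_isPolymorphism_majority [Fintype D] (hΦ : Conservative Φ)
    (hws : WeaklySubmodular Φ) :
    ∃ ρ : (Fin 3 → D) → D, IsPolymorphism Φ ρ ∧
      ∀ (p : Fin 3 → D) (i j : Fin 3), i ≠ j → p i = p j → ρ p = p i := by
  classical
  obtain ⟨ρ, hρ, hmaj⟩ := supportDefinable_setOf_isPolymorphism.exists_eqOn_of_pairs hΦ hws
    ⟨fun p => p 0, isPolymorphism_eval 0⟩ majorityValue {p | ¬ p.Injective} fun p hp q hq => by
      simp only [Finset.mem_filter, Finset.mem_univ, true_and] at hp hq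
      obtain ⟨l, hl⟩ := exists_apply_eq_majorityValue hp hq
      exact ⟨fun p => p l, isPolymorphism_eval l, hl⟩
  refine ⟨ρ, hρ, fun p i j hij hp => ?_⟩
  rw [hmaj (by simpa using fun h => hij (h hp)), majorityValue_eq_of_apply_eq hij hp]

end Polymorphism

/-- If a valued constraint language `Φ` is conservative and
weakly submodular, then the relational clone `Γ = ⟨Rel(Φ)⟩_v` has a majority
polymorphism. -/
theorem majority_of_conservative_weaklySubmodular
    {D : Type} [Fintype D] [DecidableEq D] (hD : 2 ≤ Fintype.card D)
    (Φ : Set (CFun D))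
    (hcons : ∀ u : D → ℝ≥0∞, (⟨1, fun x => u (x 0)⟩ : CFun D) ∈ Φ)
    (hws : WeaklySubmodular Φ) :
    ∃ ρ : D → D → D → D,
      (∀ a b : D, ρ a a b = a ∧ ρ a b a = a ∧ ρ b a a = a) ∧
      ∀ (k : ℕ) (g : (Fin k → D) → ℝ≥0∞), InVClone (RelSet Φ) g →
        ∀ x y z : Fin k → D, g x ≠ ⊤ → g y ≠ ⊤ → g z ≠ ⊤ →
          g (fun i => ρ (x i) (y i) (z i)) ≠ ⊤ := by
  obtain ⟨ρ, hρ, hmaj⟩ := exists_isPolymorphism_majority hcons hws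
  refine ⟨fun a b c => ρ ![a, b, c], fun a b => ⟨?_, ?_, ?_⟩, fun k g hg x y z hx hy hz => ?_⟩
  · exact hmaj ![a, a, b] 0 1 (by decide) rfl
  · exact hmaj ![a, b, a] 0 2 (by decide) rfl
  · exact hmaj ![b, a, a] 1 2 (by decide) rfl
  · have hmem : (fun i => ρ fun l => ![x, y, z] l i) ∈ {t | g t ≠ ⊤} :=
      hρ _ _ (.of_inVClone_relSet hg) ![x, y, z] (by simp [Fin.forall_fin_succ, hx, hy, hz])
    convert hmem using 4 with i
    exact congrArg ρ (FinVec.etaExpand_eq fun l => ![x, y, z] l i)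
end
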